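/- arXiv:1911.12283 — 2 statements merged into one kernel-verified Lean document; each statement's English description precedes it below -/
import Mathlib

section
/- Let p be an odd prime, 𝔽 an algebraically closed field of characteristic p, W₀ = W(𝔽), K₀ = Frac(W₀), and (V, Q) a finite-dimensional nondegenerate quadratic space over K₀. Let M be a W₀-lattice in V with pM ⊆ M^∨ ⊆ M such that the W₀-module M/M^∨ has length 2. Then there exist exactly two self-dual W₀-lattices L with M^∨ ⊆ L ⊆ M. -/
/-!
Statement 8: Let `p` be an odd prime, `𝔽` an algebraically closed field of characteristic `p`,
`W₀ = W(𝔽)` its ring of Witt vectors, `K₀ = Frac W₀`, and `(V, Q)` a finite-dimensional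
nondegenerate quadratic space over `K₀`.  Let `M` be a `W₀`-lattice with `pM ⊆ M^∨ ⊆ M` such
that `M/M^∨` has length 2 over `W₀`.  Then there exist exactly two self-dual `W₀`-lattices `L`
with `M^∨ ⊆ L ⊆ M`.
-/

open QuadraticMap

variable (p : ℕ) [Fact p.Prime] (𝔽 : Type*) [Field 𝔽] [CharP 𝔽 p] [IsAlgClosed 𝔽]
variable {V : Type*} [AddCommGroup V]
  [Module (FractionRing (WittVector p 𝔽)) V]
  [Module (WittVector p 𝔽) V]
  [IsScalarTower (WittVector p 𝔽) (FractionRing (WittVector p 𝔽)) V]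

/-- `L` is a `W₀`-lattice in the `K₀`-vector space `V`:
a finitely generated `W₀`-submodule spanning `V` over `K₀`. -/
def IsLattice (L : Submodule (WittVector p 𝔽) V) : Prop :=
  L.FG ∧ Submodule.span (FractionRing (WittVector p 𝔽)) (L : Set V) = ⊤

/-- The dual lattice `L^∨ = {x ∈ V : [x, y] ∈ W₀ for all y ∈ L}` with respect to the bilinear
form `[x, y] = Q (x + y) - Q x - Q y` associated to `Q`. -/
noncomputable def dualLattice (Q : QuadraticForm (FractionRing (WittVector p 𝔽)) V)
    (L : Submodule (WittVector p 𝔽) V) : Submodule (WittVector p 𝔽) V :=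
  LinearMap.BilinForm.dualSubmodule (QuadraticMap.polarBilin Q) L

/-- There is a saturated chain (each step a covering in the lattice of `W₀`-submodules) of
length `k` from `A` to `B`.  For `A ≤ B` this says exactly that the `W₀`-module `B/A` has
length `k`. -/
def chainLength (A B : Submodule (WittVector p 𝔽) V) (k : ℕ) : Prop :=
  ∃ f : Fin (k + 1) → Submodule (WittVector p 𝔽) V,
    f 0 = A ∧ f (Fin.last k) = B ∧ ∀ i : Fin k, f i.castSucc ⋖ f i.succ

/-!
Scaling the bilinear form by a uniformizer `π` and reducing makes `M` a module with a symmetric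
form `b` valued in the residue field, whose radical is `M^∨`. Lattices between `M^∨` and `M`
correspond to submodules of `M`, and lattice duality to orthogonality for `b`, so self-dual
lattices are Lagrangians of `b`. Since `M / M^∨` has length two and the residue field is
quadratically closed of characteristic different from two, there is a hyperbolic pair `u, v`
spanning `M` modulo `M^∨`. Then `b x x = 2 * b u x * b v x`, which forces a Lagrangian to be
`u^⊥` or `v^⊥`.
-/

theorem eq_of_covBy_of_covBy_of_le_of_lt_of_lt {α : Type*} [Lattice α] [IsLowerModularLattice α]
    {a n m c d : α} (han : a ⋖ n) (hnm : n ⋖ m) (hac : a ≤ c) (hcd : c < d) (hdm : d < m) :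
    c = a := by
  by_contra hne
  have hac' : a < c := lt_of_le_of_ne hac (Ne.symm hne)
  have hdn : ¬ d ≤ n := fun h => han.2 hac' (hcd.trans_le h)
  have hnd : ¬ n ≤ d := fun h => hnm.2 (lt_of_le_not_ge h hdn) hdm
  have hsup : n ⊔ d = m :=
    (hnm.eq_or_eq le_sup_left (sup_le hnm.le hdm.le)).resolve_left fun h => hdn (sup_eq_left.1 h)
  have hinf : n ⊓ d = a :=
    (han.eq_or_eq (le_inf han.le (hac.trans hcd.le)) inf_le_left).resolve_right
      fun h => hnd (inf_eq_left.1 h)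
  have had : a ⋖ d := hinf ▸ inf_covBy_of_covBy_sup_left (hsup.symm ▸ hnm)
  exact had.2 hac' hcd

section SubmoduleOf

variable {R E : Type*} [Semiring R] [AddCommMonoid E] [Module R E] {A B M : Submodule R E}

theorem map_subtype_submoduleOf (h : A ≤ M) : (A.submoduleOf M).map M.subtype = A := by
  rw [Submodule.submoduleOf, Submodule.map_comap_subtype, inf_eq_right.2 h]

theorem eq_map_subtype_iff {P : Submodule R M} :
    A = P.map M.subtype ↔ A ≤ M ∧ A.submoduleOf M = P := by
  constructor
  · rintro rfl
    exact ⟨M.map_subtype_le P, Submodule.comap_map_eq_of_injective M.injective_subtype P⟩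
  · rintro ⟨hA, rfl⟩
    exact (map_subtype_submoduleOf hA).symm

theorem submoduleOf_covBy_submoduleOf (hB : B ≤ M) (h : A ⋖ B) :
    A.submoduleOf M ⋖ B.submoduleOf M := by
  refine CovBy.of_image (Submodule.MapSubtype.orderEmbedding M) ?_
  rwa [Submodule.map_subtype_embedding_eq, Submodule.map_subtype_embedding_eq,
    map_subtype_submoduleOf (h.le.trans hB), map_subtype_submoduleOf hB]

end SubmoduleOf

section ResidueValuedForms

variable {R k E : Type*} [CommRing R] [Field k] [Algebra R k] [AddCommGroup E] [Module R E]

/-- A hyperbolic pair for a bilinear map `b` on an `R`-module with values in an `R`-algebra `k`: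
two isotropic vectors pairing to one. The radical of `b` may be nonzero, so that `b` stands for a
form on the quotient by it. -/
structure IsHyperbolicPair (b : E →ₗ[R] E →ₗ[R] k) (u v : E) : Prop where
  left_isotropic : b u u = 0
  right_isotropic : b v v = 0
  pairing : b u v = 1

variable {b : E →ₗ[R] E →ₗ[R] k} {u v : E}

theorem exists_isotropic_notMem [NeZero (2 : k)] (hk : ∀ a : k, IsSquare a)
    (hsurj : Function.Surjective (algebraMap R k)) (hsymm : ∀ x y, b x y = b y x)
    {D N : Submodule R E} (hDN : D < N) (hN : N < ⊤) : ∃ u ∉ D, b u u = 0 := by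
  obtain ⟨e, heN, heD⟩ := SetLike.exists_of_lt hDN
  obtain ⟨f, -, hfN⟩ := SetLike.exists_of_lt hN
  by_cases hee : b e e = 0
  · exact ⟨e, heD, hee⟩
  obtain ⟨t, ht⟩ := exists_quadratic_eq_zero hee (hk (discrim (b e e) (2 * b e f) (b f f)))
  obtain ⟨r, rfl⟩ := hsurj t
  have hmem : r • e + f ∉ N := fun h => hfN ((N.add_mem_iff_right (N.smul_mem r heN)).1 h)
  refine ⟨r • e + f, fun h => hmem (hDN.le h), ?_⟩
  simp only [map_add, map_smul, LinearMap.add_apply, LinearMap.smul_apply, Algebra.smul_def,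
    hsymm f e]
  linear_combination ht

theorem exists_isHyperbolicPair_of_isotropic [NeZero (2 : k)]
    (hsurj : Function.Surjective (algebraMap R k)) (hsymm : ∀ x y, b x y = b y x)
    (hu : u ∉ LinearMap.ker b) (huu : b u u = 0) : ∃ v, IsHyperbolicPair b u v := by
  obtain ⟨w, hw⟩ : ∃ w, b u w ≠ 0 := by
    contrapose! hu
    exact LinearMap.ext hu
  obtain ⟨w', huw⟩ : ∃ w', b u w' = 1 := by
    obtain ⟨r, hr⟩ := hsurj (b u w)⁻¹
    exact ⟨r • w, by rw [map_smul, Algebra.smul_def, hr, inv_mul_cancel₀ hw]⟩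
  obtain ⟨s, hs⟩ := hsurj (b w' w' / 2)
  refine ⟨w' - s • u, huu, ?_, ?_⟩
  · simp only [map_sub, map_smul, LinearMap.sub_apply, LinearMap.smul_apply, Algebra.smul_def,
      hsymm w' u, huu, huw, hs]
    field_simp
    ring
  · rw [map_sub, huw, map_smul, huu, smul_zero, sub_zero]

theorem le_ker_or_le_ker_of_le_orthogonalBilin [NeZero (2 : k)]
    (happly : ∀ x y, b x y = b u x * b v y + b v x * b u y)
    {P : Submodule R E} (hP : P ≤ P.orthogonalBilin b) :
    P ≤ LinearMap.ker (b u) ∨ P ≤ LinearMap.ker (b v) := by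
  by_contra! hnot
  obtain ⟨x, hxP, hxu⟩ := SetLike.not_le_iff_exists.1 hnot.1
  obtain ⟨y, hyP, hyv⟩ := SetLike.not_le_iff_exists.1 hnot.2
  have hxv : b v x = 0 := by
    have hxx : 2 * (b u x * b v x) = 0 := by
      linear_combination (hP hxP x hxP : b x x = 0) - happly x x
    simpa [two_ne_zero, LinearMap.mem_ker.not.1 hxu] using hxx
  have hxy : b u x * b v y = 0 := by
    simpa [happly x y, hxv] using (hP hyP x hxP : b x y = 0)
  exact mul_ne_zero hxu hyv hxy

namespace IsHyperbolicPair

theorem symm (hsymm : ∀ x y, b x y = b y x) (h : IsHyperbolicPair b u v) :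
    IsHyperbolicPair b v u :=
  ⟨h.right_isotropic, h.left_isotropic, hsymm v u ▸ h.pairing⟩

theorem ker_inf_ker_eq_ker (h : IsHyperbolicPair b u v) (hsymm : ∀ x y, b x y = b y x)
    {N : Submodule R E} (hDN : LinearMap.ker b ⋖ N) (hN : N ⋖ ⊤) :
    LinearMap.ker (b u) ⊓ LinearMap.ker (b v) = LinearMap.ker b := by
  have hle : LinearMap.ker b ≤ LinearMap.ker (b u) ⊓ LinearMap.ker (b v) := fun x hx =>
    ⟨(hsymm u x).trans (LinearMap.congr_fun hx u), (hsymm v x).trans (LinearMap.congr_fun hx v)⟩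
  have hlt : LinearMap.ker (b u) ⊓ LinearMap.ker (b v) < LinearMap.ker (b u) :=
    inf_lt_left.2 fun hle => one_ne_zero (h.pairing.symm.trans (hsymm u v ▸ hle h.left_isotropic))
  have hlt_top : LinearMap.ker (b u) < ⊤ :=
    SetLike.lt_iff_le_and_exists.2 ⟨le_top, v, trivial, fun hv =>
      one_ne_zero (h.pairing.symm.trans hv)⟩
  exact eq_of_covBy_of_covBy_of_le_of_lt_of_lt hDN hN hle hlt hlt_top

theorem apply_eq (h : IsHyperbolicPair b u v) (hsurj : Function.Surjective (algebraMap R k))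
    (hsymm : ∀ x y, b x y = b y x)
    (hker : LinearMap.ker (b u) ⊓ LinearMap.ker (b v) ≤ LinearMap.ker b) (x y : E) :
    b x y = b u x * b v y + b v x * b u y := by
  obtain ⟨s, hs⟩ := hsurj (b v x)
  obtain ⟨t, ht⟩ := hsurj (b u x)
  have hmem : x - s • u - t • v ∈ LinearMap.ker b := by
    refine hker ?_
    rw [Submodule.mem_inf, LinearMap.mem_ker, LinearMap.mem_ker]
    constructor <;>
      simp [Algebra.smul_def, hs, ht, h.left_isotropic, h.right_isotropic, h.pairing, hsymm v u]
  have hzero : b x y - s • b u y - t • b v y = 0 := by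
    simpa only [map_sub, map_smul, LinearMap.sub_apply, LinearMap.smul_apply,
      LinearMap.zero_apply] using LinearMap.congr_fun hmem y
  rw [Algebra.smul_def, Algebra.smul_def, hs, ht] at hzero
  linear_combination hzero

theorem ker_ne_ker (h : IsHyperbolicPair b u v) : LinearMap.ker (b u) ≠ LinearMap.ker (b v) :=
  fun heq => one_ne_zero <| h.pairing.symm.trans <|
    LinearMap.mem_ker.1 (heq ▸ LinearMap.mem_ker.2 h.right_isotropic)

theorem orthogonalBilin_ker_left (h : IsHyperbolicPair b u v)
    (happly : ∀ x y, b x y = b u x * b v y + b v x * b u y) :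
    (LinearMap.ker (b u)).orthogonalBilin b = LinearMap.ker (b u) := by
  refine le_antisymm (fun x hx => hx u h.left_isotropic) fun x hx y hy => ?_
  rw [happly, LinearMap.mem_ker.1 hx, LinearMap.mem_ker.1 hy, zero_mul, mul_zero, add_zero]

theorem orthogonalBilin_eq_self_iff [NeZero (2 : k)] (h : IsHyperbolicPair b u v)
    (hsymm : ∀ x y, b x y = b y x) (happly : ∀ x y, b x y = b u x * b v y + b v x * b u y)
    (P : Submodule R E) :
    P.orthogonalBilin b = P ↔ P = LinearMap.ker (b u) ∨ P = LinearMap.ker (b v) := by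
  have hu := h.orthogonalBilin_ker_left happly
  have hv := (h.symm hsymm).orthogonalBilin_ker_left fun x y => by rw [happly, add_comm]
  refine ⟨fun hP => ?_, by rintro (rfl | rfl) <;> assumption⟩
  have heq_of_le : ∀ {L : Submodule R E}, L.orthogonalBilin b = L → P ≤ L → P = L :=
    fun hL hPL => le_antisymm hPL (hL ▸ hP ▸ Submodule.orthogonalBilin_le hPL)
  exact (le_ker_or_le_ker_of_le_orthogonalBilin happly hP.ge).imp (heq_of_le hu) (heq_of_le hv)

end IsHyperbolicPair

theorem exists_two_eq_orthogonalBilin [NeZero (2 : k)] (hk : ∀ a : k, IsSquare a)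
    (hsurj : Function.Surjective (algebraMap R k)) (hsymm : ∀ x y, b x y = b y x)
    {N : Submodule R E} (hDN : LinearMap.ker b ⋖ N) (hN : N ⋖ ⊤) :
    ∃ P₁ P₂ : Submodule R E, P₁ ≠ P₂ ∧
      ∀ P : Submodule R E, P.orthogonalBilin b = P ↔ P = P₁ ∨ P = P₂ := by
  obtain ⟨u, hu, huu⟩ := exists_isotropic_notMem hk hsurj hsymm hDN.lt hN.lt
  obtain ⟨v, h⟩ := exists_isHyperbolicPair_of_isotropic hsurj hsymm hu huu
  have happly := h.apply_eq hsurj hsymm (h.ker_inf_ker_eq_ker hsymm hDN hN).le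
  exact ⟨_, _, h.ker_ne_ker, h.orthogonalBilin_eq_self_iff hsymm happly⟩

end ResidueValuedForms

section Lattices

open LinearMap (BilinForm)
open IsLocalRing (ResidueField)

variable {R K E : Type*} [CommRing R] [Field K] [Algebra R K] [AddCommGroup E] [Module R E]
  [Module K E] [IsScalarTower R K E]

theorem dualSubmodule_anti (B : BilinForm K E) {L L' : Submodule R E} (h : L ≤ L') :
    B.dualSubmodule L' ≤ B.dualSubmodule L :=
  fun _ hx y hy => hx y (h hy)

variable [IsFractionRing R K]

theorem dualSubmodule_dualSubmodule_of_isLattice [IsDomain R] [IsPrincipalIdealRing R]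
    {B : BilinForm K E} (hB : B.Nondegenerate) (hsymm : B.IsSymm) (M : Submodule R E)
    [Submodule.IsLattice K M] : B.dualSubmodule (B.dualSubmodule M) = M := by
  let basis := Module.Free.chooseBasis R M
  have hrange : Set.range (basis.extendOfIsLattice K) = M.subtype '' Set.range basis := by
    rw [← Set.range_comp]
    exact congrArg Set.range (funext fun i => basis.extendOfIsLattice_apply K i)
  have hspan : Submodule.span R (Set.range (basis.extendOfIsLattice K)) = M := by
    rw [hrange, ← Submodule.map_span, basis.span_eq, Submodule.map_top, Submodule.range_subtype]
  simpa only [hspan] using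
    B.dualSubmodule_dualSubmodule_of_basis (R := R) hB hsymm (basis.extendOfIsLattice K)

theorem isLattice_of_smul_mem_of_le [IsNoetherianRing R] {π : R} (hπ : π ≠ 0)
    {L M : Submodule R E} [Submodule.IsLattice K M] (hπL : ∀ x ∈ M, π • x ∈ L) (hLM : L ≤ M) :
    Submodule.IsLattice K L where
  fg := Submodule.IsLattice.fg (A := K) (M := M) |>.of_le hLM
  span_eq_top := by
    rw [eq_top_iff, ← Submodule.IsLattice.span_eq_top (A := K) (M := M), Submodule.span_le]
    intro x hx
    have hπx : algebraMap R K π • x ∈ Submodule.span K (L : Set E) := by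
      rw [algebraMap_smul]
      exact Submodule.subset_span (hπL x hx)
    exact (Submodule.smul_mem_iff _
      ((map_ne_zero_iff _ (IsFractionRing.injective R K)).2 hπ)).1 hπx

variable [IsDomain R]

/-- The form `(x, y) ↦ π * B x y mod 𝔪` on a submodule `M` with `π M ⊆ M^∨`, valued in the residue
field. For a uniformizer `π` its radical is `M^∨ ∩ M`; it is kept as a form on `M` instead of
descending to `M / M^∨`. -/
noncomputable def reducedForm [IsLocalRing R] (B : BilinForm K E) {M : Submodule R E} {π : R}
    (hM : ∀ x ∈ M, π • x ∈ B.dualSubmodule M) : M →ₗ[R] M →ₗ[R] ResidueField R :=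
  LinearMap.compRight R (Algebra.linearMap R (ResidueField R)) ∘ₗ
    B.dualSubmoduleToDual M ∘ₗ (LinearMap.lsmul R E π).restrict hM

theorem exists_residue_eq_reducedForm [IsLocalRing R] (B : BilinForm K E) {M : Submodule R E}
    {π : R} (hM : ∀ x ∈ M, π • x ∈ B.dualSubmodule M) (x y : M) :
    ∃ r : R, IsLocalRing.residue R r = reducedForm B hM x y ∧
      algebraMap R K r = algebraMap R K π * B x y := by
  refine ⟨B.dualSubmoduleParing ⟨π • (x : E), hM x x.2⟩ y, rfl, ?_⟩
  rw [B.dualSubmoduleParing_spec, ← smul_eq_mul, algebraMap_smul, ← LinearMap.smul_apply,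
    ← LinearMap.map_smul_of_tower]

theorem reducedForm_comm [IsLocalRing R] {B : BilinForm K E} (hsymm : B.IsSymm)
    {M : Submodule R E} {π : R} (hM : ∀ x ∈ M, π • x ∈ B.dualSubmodule M) (x y : M) :
    reducedForm B hM x y = reducedForm B hM y x := by
  obtain ⟨r, hr, hrB⟩ := exists_residue_eq_reducedForm B hM x y
  obtain ⟨s, hs, hsB⟩ := exists_residue_eq_reducedForm B hM y x
  have hrs : r = s := IsFractionRing.injective R K (by rw [hrB, hsB, hsymm.eq x y])
  rw [← hr, ← hs, hrs]

section DiscreteValuationRing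

variable [IsDiscreteValuationRing R] {B : BilinForm K E} {M : Submodule R E} {π : R}

theorem reducedForm_eq_zero_iff (hπ : Irreducible π)
    (hM : ∀ x ∈ M, π • x ∈ B.dualSubmodule M) (x y : M) :
    reducedForm B hM x y = 0 ↔ B x y ∈ (1 : Submodule R K) := by
  obtain ⟨r, hr, hrB⟩ := exists_residue_eq_reducedForm B hM x y
  have hπK : algebraMap R K π ≠ 0 :=
    (map_ne_zero_iff _ (IsFractionRing.injective R K)).2 hπ.ne_zero
  rw [← hr, IsLocalRing.residue_eq_zero_iff, hπ.maximalIdeal_eq, Ideal.mem_span_singleton,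
    Submodule.mem_one]
  refine exists_congr fun c => ?_
  rw [← (IsFractionRing.injective R K).eq_iff, hrB, map_mul, mul_right_inj' hπK, eq_comm]

theorem submoduleOf_dualSubmodule (hsymm : B.IsSymm) (hπ : Irreducible π)
    (hM : ∀ x ∈ M, π • x ∈ B.dualSubmodule M) {L : Submodule R E} (hLM : L ≤ M) :
    (B.dualSubmodule L).submoduleOf M =
      (L.submoduleOf M).orthogonalBilin (reducedForm B hM) := by
  ext x
  simp only [Submodule.submoduleOf, Submodule.mem_comap, Submodule.subtype_apply,
    LinearMap.BilinForm.mem_dualSubmodule, Submodule.mem_orthogonalBilin_iff,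
    reducedForm_eq_zero_iff hπ hM, Subtype.forall]
  exact ⟨fun h y _ hy => hsymm.eq x y ▸ h y hy, fun h y hy => hsymm.eq x y ▸ h y (hLM hy) hy⟩

theorem ker_reducedForm (hπ : Irreducible π) (hM : ∀ x ∈ M, π • x ∈ B.dualSubmodule M) :
    LinearMap.ker (reducedForm B hM) = (B.dualSubmodule M).submoduleOf M := by
  ext x
  simp only [LinearMap.mem_ker, LinearMap.ext_iff, LinearMap.zero_apply,
    reducedForm_eq_zero_iff hπ hM, Subtype.forall]
  rfl

theorem dualSubmodule_eq_self_iff [Submodule.IsLattice K M] (hB : B.Nondegenerate)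
    (hsymm : B.IsSymm) (hπ : Irreducible π) (hM : ∀ x ∈ M, π • x ∈ B.dualSubmodule M)
    (hDM : B.dualSubmodule M ≤ M) {L : Submodule R E} (hLM : L ≤ M) :
    B.dualSubmodule L = L ↔
      (L.submoduleOf M).orthogonalBilin (reducedForm B hM) = L.submoduleOf M := by
  rw [← submoduleOf_dualSubmodule hsymm hπ hM hLM]
  refine ⟨congrArg (Submodule.submoduleOf · M), fun h => ?_⟩
  have hDL : B.dualSubmodule M ≤ L := fun x hx =>
    have hxL : (⟨x, hDM hx⟩ : M) ∈ (B.dualSubmodule L).submoduleOf M :=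
      dualSubmodule_anti B hLM hx
    (h ▸ hxL : (⟨x, hDM hx⟩ : M) ∈ L.submoduleOf M)
  have hdual_le : B.dualSubmodule L ≤ M :=
    (dualSubmodule_anti B hDL).trans_eq (dualSubmodule_dualSubmodule_of_isLattice hB hsymm M)
  rw [← map_subtype_submoduleOf hdual_le, h, map_subtype_submoduleOf hLM]

theorem statement_8_general (h2 : IsUnit (2 : R)) (hsq : ∀ a : ResidueField R, IsSquare a)
    (hπ : Irreducible π) (hB : B.Nondegenerate) (hsymm : B.IsSymm) [Submodule.IsLattice K M]
    (hM : ∀ x ∈ M, π • x ∈ B.dualSubmodule M) {N : Submodule R E}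
    (hDN : B.dualSubmodule M ⋖ N) (hNM : N ⋖ M) :
    ∃ L₁ L₂ : Submodule R E, L₁ ≠ L₂ ∧ ∀ L : Submodule R E,
      (Submodule.IsLattice K L ∧ B.dualSubmodule L = L ∧ B.dualSubmodule M ≤ L ∧ L ≤ M) ↔
        (L = L₁ ∨ L = L₂) := by
  have : NeZero (2 : ResidueField R) := ⟨(h2.map (IsLocalRing.residue R)).ne_zero⟩
  have hker_covBy : LinearMap.ker (reducedForm B hM) ⋖ N.submoduleOf M :=
    ker_reducedForm hπ hM ▸ submoduleOf_covBy_submoduleOf hNM.le hDN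
  have hcovBy_top : N.submoduleOf M ⋖ ⊤ :=
    Submodule.submoduleOf_self M ▸ submoduleOf_covBy_submoduleOf le_rfl hNM
  obtain ⟨P₁, P₂, hne, hP⟩ := exists_two_eq_orthogonalBilin hsq IsLocalRing.residue_surjective
    (reducedForm_comm hsymm hM) hker_covBy hcovBy_top
  refine ⟨P₁.map M.subtype, P₂.map M.subtype,
    (Submodule.map_injective_of_injective M.injective_subtype).ne hne, fun L => ?_⟩
  rw [eq_map_subtype_iff, eq_map_subtype_iff, ← and_or_left, ← hP]
  have hdual_iff := fun hLM : L ≤ M =>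
    dualSubmodule_eq_self_iff hB hsymm hπ hM (hDN.le.trans hNM.le) hLM
  refine ⟨fun ⟨_, hL, _, hLM⟩ => ⟨hLM, (hdual_iff hLM).1 hL⟩, fun ⟨hLM, hL⟩ => ?_⟩
  have hself : B.dualSubmodule L = L := (hdual_iff hLM).2 hL
  have hDL : B.dualSubmodule M ≤ L := (dualSubmodule_anti B hLM).trans_eq hself
  exact ⟨isLattice_of_smul_mem_of_le hπ.ne_zero (fun x hx => hDL (hM x hx)) hLM, hself, hDL, hLM⟩

end DiscreteValuationRing

end Lattices

theorem isSquare_residueField_wittVector {p : ℕ} [Fact p.Prime] {k : Type*} [Field k] [CharP k p]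
    [PerfectRing k p] (hk : ∀ a : k, IsSquare a)
    (a : IsLocalRing.ResidueField (WittVector p k)) : IsSquare a := by
  obtain ⟨x, rfl⟩ := IsLocalRing.residue_surjective a
  obtain ⟨c, hc⟩ := hk (WittVector.constantCoeff x)
  obtain ⟨y, rfl⟩ := WittVector.constantCoeff_surjective p c
  refine ⟨IsLocalRing.residue _ y, ?_⟩
  rw [← map_mul, ← sub_eq_zero, ← map_sub, IsLocalRing.residue_eq_zero_iff,
    IsLocalRing.mem_maximalIdeal, mem_nonunits_iff]
  intro hunit
  refine (hunit.map WittVector.constantCoeff).ne_zero ?_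
  rw [map_sub, map_mul, hc, sub_self]

theorem isUnit_two_wittVector {p : ℕ} [Fact p.Prime] (hp : p ≠ 2) (k : Type*) [Field k]
    [CharP k p] : IsUnit (2 : WittVector p k) := by
  refine WittVector.isUnit_of_coeff_zero_ne_zero _ ?_
  change WittVector.constantCoeff (2 : WittVector p k) ≠ 0
  rw [map_ofNat]
  exact Ring.two_ne_zero (ringChar.eq k p ▸ hp)

theorem isLattice_iff (p : ℕ) [Fact p.Prime] (k : Type*) [Field k] {E : Type*} [AddCommGroup E]
    [Module (FractionRing (WittVector p k)) E] [Module (WittVector p k) E]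
    [IsScalarTower (WittVector p k) (FractionRing (WittVector p k)) E]
    {L : Submodule (WittVector p k) E} :
    IsLattice p k L ↔ Submodule.IsLattice (FractionRing (WittVector p k)) L :=
  ⟨fun h => ⟨h.1, h.2⟩, fun h => ⟨h.fg, h.span_eq_top⟩⟩

theorem exists_covBy_covBy_of_chainLength_two (p : ℕ) [Fact p.Prime] (k : Type*) [Field k]
    {E : Type*} [AddCommGroup E] [Module (WittVector p k) E] {A B : Submodule (WittVector p k) E}
    (h : chainLength p k A B 2) : ∃ N, A ⋖ N ∧ N ⋖ B := by
  obtain ⟨f, rfl, rfl, hf⟩ := h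
  exact ⟨f 1, hf 0, hf 1⟩

theorem statement_8 (hp : p ≠ 2) [FiniteDimensional (FractionRing (WittVector p 𝔽)) V]
    (Q : QuadraticForm (FractionRing (WittVector p 𝔽)) V)
    (hQ : LinearMap.BilinForm.Nondegenerate (QuadraticMap.polarBilin Q))
    (M : Submodule (WittVector p 𝔽) V) (hM : IsLattice p 𝔽 M)
    (hMp : ∀ x ∈ M, (p : WittVector p 𝔽) • x ∈ dualLattice p 𝔽 Q M)
    (hMdual : dualLattice p 𝔽 Q M ≤ M)
    (hlen : chainLength p 𝔽 (dualLattice p 𝔽 Q M) M 2) :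
    ∃ L₁ L₂ : Submodule (WittVector p 𝔽) V, L₁ ≠ L₂ ∧
      ∀ L : Submodule (WittVector p 𝔽) V,
        (IsLattice p 𝔽 L ∧ dualLattice p 𝔽 Q L = L ∧ dualLattice p 𝔽 Q M ≤ L ∧ L ≤ M) ↔
          (L = L₁ ∨ L = L₂) := by
  have := (isLattice_iff p 𝔽).1 hM
  obtain ⟨N, hDN, hNM⟩ := exists_covBy_covBy_of_chainLength_two p 𝔽 hlen
  simp only [isLattice_iff]
  exact statement_8_general (isUnit_two_wittVector hp 𝔽)
    (isSquare_residueField_wittVector IsAlgClosed.exists_eq_mul_self) (WittVector.irreducible p)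
    hQ ⟨polar_comm Q⟩ hMp hDN hNM
end

section
/- Let p be an odd prime and (V, Q) a nondegenerate quadratic space over ℚ_p of dimension n ≥ 3 containing no self-dual lattice. Let 𝔽 be an algebraically closed field of characteristic p, W₀ = W(𝔽), K₀ = Frac(W₀), and extend Q to the base change V ⊗_{ℚ_p} K₀. Consider pairs (Λ, L) where Λ ⊆ V is a vertex lattice of type 2 (pΛ ⊆ Λ^∨ ⊆ Λ, dim_{𝔽_p}(Λ/Λ^∨) = 2) and L is a self-dual W₀-lattice in V ⊗_{ℚ_p} K₀ with Λ^∨ ⊗_{ℤ_p} W₀ ⊆ L ⊆ Λ ⊗_{ℤ_p} W₀. Then for any two such pairs (Λ₁, L₁) and (Λ₂, L₂) there exists a ℚ_p-linear isometry g of (V, Q) with det(g) = 1 such that g(Λ₁) = Λ₂ and (g ⊗ 1)(L₁) = L₂; that is, SO(V)(ℚ_p) acts transitively on the set of such pairs. -/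
/-!
Statement 10: Let `p` be an odd prime and `(V, Q)` a nondegenerate quadratic space over `ℚ_p`
of dimension `n ≥ 3` containing no self-dual lattice.  Let `𝔽` be an algebraically closed
field of characteristic `p`, `W₀ = W(𝔽)`, `K₀ = Frac W₀`, and extend `Q` to `V ⊗_{ℚ_p} K₀`.
Consider pairs `(Λ, L)` where `Λ ⊆ V` is a vertex lattice of type 2 and `L` is a self-dual
`W₀`-lattice in `V ⊗_{ℚ_p} K₀` with `Λ^∨ ⊗ W₀ ⊆ L ⊆ Λ ⊗ W₀`.  Then `SO(V)(ℚ_p)` acts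
transitively on the set of such pairs.
-/

open QuadraticMap

variable (p : ℕ) [Fact p.Prime]
variable {V : Type*} [AddCommGroup V] [Module ℚ_[p] V] [Module ℤ_[p] V]
  [IsScalarTower ℤ_[p] ℚ_[p] V]

/-- `L` is a `ℤ_p`-lattice in the `ℚ_p`-vector space `V`. -/
def IsZpLattice (L : Submodule ℤ_[p] V) : Prop :=
  L.FG ∧ Submodule.span ℚ_[p] (L : Set V) = ⊤

/-- The dual lattice `L^∨` with respect to the bilinear form associated to `Q`. -/
noncomputable def zpDual (Q : QuadraticForm ℚ_[p] V) (L : Submodule ℤ_[p] V) :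
    Submodule ℤ_[p] V :=
  LinearMap.BilinForm.dualSubmodule (QuadraticMap.polarBilin Q) L

/-- A saturated chain of `ℤ_p`-submodules of length `k` from `A` to `B`; for `A ≤ B` killed by
`p` this says `dim_{𝔽_p} (B/A) = k`. -/
def zpChainLength (A B : Submodule ℤ_[p] V) (k : ℕ) : Prop :=
  ∃ f : Fin (k + 1) → Submodule ℤ_[p] V,
    f 0 = A ∧ f (Fin.last k) = B ∧ ∀ i : Fin k, f i.castSucc ⋖ f i.succ

/-- `Λ` is a vertex lattice of type 2. -/
noncomputable def IsTypeTwoVertexLattice (Q : QuadraticForm ℚ_[p] V)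
    (Λ : Submodule ℤ_[p] V) : Prop :=
  IsZpLattice p Λ ∧ (∀ x ∈ Λ, (p : ℤ_[p]) • x ∈ zpDual p Q Λ) ∧
    zpDual p Q Λ ≤ Λ ∧ zpChainLength p (zpDual p Q Λ) Λ 2

section BaseChange

variable (𝔽 : Type*) [Field 𝔽] [CharP 𝔽 p] [IsAlgClosed 𝔽]
variable [Algebra ℚ_[p] (FractionRing (WittVector p 𝔽))]
variable [SMulCommClass ℚ_[p] (WittVector p 𝔽) (FractionRing (WittVector p 𝔽))]

/-- `L` is a `W₀`-lattice in `K₀ ⊗_{ℚ_p} V`. -/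
def IsWLattice
    (L : Submodule (WittVector p 𝔽) (TensorProduct ℚ_[p] (FractionRing (WittVector p 𝔽)) V)) :
    Prop :=
  L.FG ∧ Submodule.span (FractionRing (WittVector p 𝔽))
    (L : Set (TensorProduct ℚ_[p] (FractionRing (WittVector p 𝔽)) V)) = ⊤

/-- The dual lattice in `K₀ ⊗_{ℚ_p} V` with respect to the base-changed form. -/
noncomputable def wDual
    (QK : QuadraticForm (FractionRing (WittVector p 𝔽))
      (TensorProduct ℚ_[p] (FractionRing (WittVector p 𝔽)) V))
    (L : Submodule (WittVector p 𝔽) (TensorProduct ℚ_[p] (FractionRing (WittVector p 𝔽)) V)) :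
    Submodule (WittVector p 𝔽) (TensorProduct ℚ_[p] (FractionRing (WittVector p 𝔽)) V) :=
  LinearMap.BilinForm.dualSubmodule (QuadraticMap.polarBilin QK) L

/-- `Λ ⊗_{ℤ_p} W₀`, viewed inside `K₀ ⊗_{ℚ_p} V`: the `W₀`-span of the image of `Λ`. -/
noncomputable def baseChangeLattice (Λ : Submodule ℤ_[p] V) :
    Submodule (WittVector p 𝔽) (TensorProduct ℚ_[p] (FractionRing (WittVector p 𝔽)) V) :=
  Submodule.span (WittVector p 𝔽)
    ((fun v => (1 : FractionRing (WittVector p 𝔽)) ⊗ₜ[ℚ_[p]] v) '' (Λ : Set V))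

/-!
A type 2 vertex lattice `Λ` has an orthogonal basis whose first two vectors have norms `α₀ / p` and
`α₁ / p` and whose remaining vectors have unit norms. A self-dual `W₀`-lattice between `Λ^∨` and `Λ`
is the preimage of an isotropic line of `Λ / Λ^∨`; such a line is spanned by `t e₀ + e₁` with
`α₀ t² + α₁ ≡ 0`, so there are two of them, exchanged by `e₁ ↦ -e₁`. If `-α₀ α₁` were a square, then
the line would be rational and `V` would contain a self-dual lattice. So `-α₀ α₁` is a nonsquare
unit, and comparing discriminants also fixes the square class of the product of the unit norms.
Unimodular forms over `ℤ_p` are classified by rank and discriminant, hence any two type 2 vertex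
lattices have orthogonal bases with the same norms, and these can be chosen so that the given
self-dual lattices correspond to the same `t`. The isometry matching these bases has determinant
`±1`; as `n ≥ 3`, the sign can be corrected by negating a basis vector of unit norm, which does not
affect the line.
-/

section HenselianSquares

variable {R : Type*} [CommRing R] [HenselianLocalRing R]

theorem isSquare_of_isSquare_residue (h2 : IsUnit (2 : R)) {v : Rˣ}
    (hv : IsSquare (IsLocalRing.residue R v)) : IsSquare v := by
  obtain ⟨r, hr⟩ := hv
  obtain ⟨a, rfl⟩ := IsLocalRing.residue_surjective r
  have ha : IsUnit a := by
    rw [← IsLocalRing.residue_ne_zero_iff_isUnit]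
    intro ha
    exact (IsLocalRing.residue_ne_zero_iff_isUnit _).2 v.isUnit (by rw [hr, ha, mul_zero])
  have hroot : a ^ 2 - v ∈ IsLocalRing.maximalIdeal R := by
    rw [← IsLocalRing.residue_eq_zero_iff, map_sub, map_pow, hr, pow_two, sub_self]
  obtain ⟨s, hs, -⟩ := HenselianLocalRing.is_henselian
    (Polynomial.X ^ 2 - Polynomial.C (v : R)) (Polynomial.monic_X_pow_sub_C _ two_ne_zero) a
    (by simpa using hroot) (by simpa [one_add_one_eq_two] using h2.mul ha)
  have hs : s ^ 2 = v := by simpa [sub_eq_zero] using hs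
  have hsu : IsUnit s := (isUnit_pow_iff two_ne_zero).1 (hs ▸ v.isUnit)
  exact (isSquare_iff_exists_sq _).2 ⟨hsu.unit, by ext; simp [hs]⟩

theorem ringChar_residueField_ne_two (h2 : IsUnit (2 : R)) :
    ringChar (IsLocalRing.ResidueField R) ≠ 2 := by
  refine fun h => (IsLocalRing.residue_ne_zero_iff_isUnit (2 : R)).2 h2 ?_
  rw [map_ofNat]
  exact_mod_cast (ringChar.spec (IsLocalRing.ResidueField R) 2).2 h.dvd

theorem exists_mul_sq_add_eq_of_residue (h2 : IsUnit (2 : R)) (a c : Rˣ) {x d : R}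
    (hx : IsLocalRing.residue R x ≠ 0)
    (h : IsLocalRing.residue R (a * x ^ 2 + d) = IsLocalRing.residue R c) :
    ∃ x' : R, a * x' ^ 2 + d = c := by
  have hxd : IsLocalRing.residue R (↑a⁻¹ * (c - d)) = IsLocalRing.residue R x ^ 2 := by
    rw [map_mul, map_sub, ← h, map_add, add_sub_cancel_right, ← map_mul, Units.inv_mul_cancel_left,
      map_pow]
  have hunit : IsUnit (↑a⁻¹ * (c - d) : R) := by
    rw [← IsLocalRing.residue_ne_zero_iff_isUnit, hxd]
    exact pow_ne_zero 2 hx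
  obtain ⟨s, hs⟩ := isSquare_of_isSquare_residue h2 (v := hunit.unit)
    ⟨IsLocalRing.residue R x, by rw [IsUnit.unit_spec, hxd, pow_two]⟩
  have hs' : (s : R) ^ 2 = ↑a⁻¹ * (c - d) := by
    rw [pow_two, ← Units.val_mul, ← hs, IsUnit.unit_spec]
  exact ⟨s, by rw [hs', Units.mul_inv_cancel_left, sub_add_cancel]⟩

variable [Finite (IsLocalRing.ResidueField R)]

theorem isSquare_mul_of_not_isSquare (h2 : IsUnit (2 : R)) {u v : Rˣ}
    (hu : ¬ IsSquare u) (hv : ¬ IsSquare v) : IsSquare (u * v) := by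
  classical
  have := Fintype.ofFinite (IsLocalRing.ResidueField R)
  have hneg {w : Rˣ} (hw : ¬ IsSquare w) :
      quadraticChar (IsLocalRing.ResidueField R) (IsLocalRing.residue R w) = -1 :=
    quadraticChar_neg_one_iff_not_isSquare.2 fun h => hw (isSquare_of_isSquare_residue h2 h)
  refine isSquare_of_isSquare_residue h2 ((quadraticChar_one_iff_isSquare ?_).1 ?_)
  · exact (IsLocalRing.residue_ne_zero_iff_isUnit _).2 (u * v).isUnit
  · rw [Units.val_mul, map_mul, map_mul, hneg hu, hneg hv, neg_one_mul, neg_neg]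

theorem exists_mul_sq_add_mul_sq_eq (h2 : IsUnit (2 : R)) (a b c : Rˣ) :
    ∃ x y : R, a * x ^ 2 + b * y ^ 2 = c := by
  have := Fintype.ofFinite (IsLocalRing.ResidueField R)
  have hres (u : Rˣ) : IsLocalRing.residue R u ≠ 0 :=
    (IsLocalRing.residue_ne_zero_iff_isUnit _).2 u.isUnit
  obtain ⟨x₀, y₀, h₀⟩ := FiniteField.exists_root_sum_quadratic
    (Polynomial.degree_quadratic (b := 0) (c := -IsLocalRing.residue R c) (hres a))
    (Polynomial.degree_quadratic (b := 0) (c := 0) (hres b))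
    (FiniteField.odd_card_of_char_ne_two (ringChar_residueField_ne_two h2))
  obtain ⟨x, rfl⟩ := IsLocalRing.residue_surjective x₀
  obtain ⟨y, rfl⟩ := IsLocalRing.residue_surjective y₀
  have hxy : IsLocalRing.residue R (a * x ^ 2 + b * y ^ 2) = IsLocalRing.residue R c := by
    simp only [Polynomial.eval_add, Polynomial.eval_mul, Polynomial.eval_C, Polynomial.eval_pow,
      Polynomial.eval_X] at h₀
    simp only [map_add, map_mul, map_pow]
    linear_combination h₀
  by_cases hx : IsLocalRing.residue R x = 0
  · have hy : IsLocalRing.residue R y ≠ 0 := fun hy => hres c (by simp [← hxy, hx, hy])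
    obtain ⟨y', hy'⟩ := exists_mul_sq_add_eq_of_residue h2 b c hy (d := a * x ^ 2)
      (by rw [add_comm, hxy])
    exact ⟨x, y', by rw [add_comm, hy']⟩
  · obtain ⟨x', hx'⟩ := exists_mul_sq_add_eq_of_residue h2 a c hx hxy
    exact ⟨x', y, hx'⟩

end HenselianSquares

section UnimodularClassification

variable {R : Type*} [CommRing R]

theorem weightedSumSquares_cons_equivalent {n : ℕ} (a : Rˣ) (w : Fin n → Rˣ) :
    (weightedSumSquares R (Fin.cons a w : Fin (n + 1) → Rˣ)).Equivalent
      ((a • QuadraticMap.sq (R := R)).prod (weightedSumSquares R w)) := by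
  refine ⟨⟨(Fin.consLinearEquiv R fun _ => R).symm, fun v => ?_⟩⟩
  simp [Fin.sum_univ_succ, Fin.consLinearEquiv, Fin.tail]

theorem smul_sq_prod_smul_sq_prod_equivalent {N : Type*} [AddCommGroup N] [Module R N]
    (q : QuadraticMap R N R) {a b c : Rˣ} {x y : R} (h : a * x ^ 2 + b * y ^ 2 = c) :
    ((a • QuadraticMap.sq (R := R)).prod ((b • QuadraticMap.sq (R := R)).prod q)).Equivalent
      ((c • QuadraticMap.sq (R := R)).prod (((a * b * c) • QuadraticMap.sq (R := R)).prod q)) := by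
  have hc : (↑c⁻¹ : R) * (a * x ^ 2 + b * y ^ 2) = 1 := by rw [h, Units.inv_mul]
  -- The vector `(x, y)` has norm `c`, and `(-b y, a x)` is orthogonal to it of norm `a b c`.
  refine QuadraticMap.Equivalent.symm ⟨⟨⟨⟨⟨fun z =>
    (x * z.1 - b * y * z.2.1, y * z.1 + a * x * z.2.1, z.2.2), ?_⟩, ?_⟩, fun z =>
    (↑c⁻¹ * (a * x * z.1 + b * y * z.2.1), ↑c⁻¹ * (x * z.2.1 - y * z.1), z.2.2), ?_, ?_⟩, ?_⟩⟩
  · intro z z'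
    ext <;> simp <;> ring
  · intro r z
    ext <;> simp <;> ring
  · rintro ⟨s, t, m⟩
    ext
    · linear_combination s * hc
    · linear_combination t * hc
    · rfl
  · rintro ⟨s, t, m⟩
    ext
    · linear_combination s * hc
    · linear_combination t * hc
    · rfl
  · rintro ⟨s, t, m⟩
    simp only [QuadraticMap.prod_apply, smul_apply, sq_apply, Units.smul_def, smul_eq_mul,
      Units.val_mul]
    linear_combination (s * s + a * b * t * t) * h

theorem weightedSumSquares_cons_cons_equivalent {n : ℕ} (w : Fin n → Rˣ) {a b c : Rˣ} {x y : R}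
    (h : a * x ^ 2 + b * y ^ 2 = c) :
    (weightedSumSquares R (Fin.cons a (Fin.cons b w : Fin (n + 1) → Rˣ) :
      Fin (n + 2) → Rˣ)).Equivalent
      (weightedSumSquares R (Fin.cons c (Fin.cons (a * b * c) w : Fin (n + 1) → Rˣ) :
        Fin (n + 2) → Rˣ)) :=
  have split (a b : Rˣ) := (weightedSumSquares_cons_equivalent a _).trans
    (.prod (.refl _) (weightedSumSquares_cons_equivalent b w))
  ((split a b).trans (smul_sq_prod_smul_sq_prod_equivalent _ h)).trans (split c (a * b * c)).symm

theorem weightedSumSquares_units_equivalent [HenselianLocalRing R]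
    [Finite (IsLocalRing.ResidueField R)] (h2 : IsUnit (2 : R)) :
    ∀ {n : ℕ} (w w' : Fin n → Rˣ), IsSquare ((∏ i, w i) * ∏ i, w' i) →
      (weightedSumSquares R w).Equivalent (weightedSumSquares R w')
  | 0, w, w', _ => Subsingleton.elim w w' ▸ .refl _
  | 1, w, w', ⟨u, hu⟩ => by
    rw [Fin.prod_univ_one, Fin.prod_univ_one] at hu
    refine ⟨QuadraticForm.isometryEquivWeightedSumSquaresWeightedSumSquares
      (fun _ => toUnits (u / w' 0)) fun i => ?_⟩
    rw [Subsingleton.elim i 0, val_toUnits_apply, div_pow, pow_two u, ← hu, pow_two]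
    simp
  | n + 2, w, w', h => by
    obtain ⟨x, y, hxy⟩ := exists_mul_sq_add_mul_sq_eq h2 (w 0) (w 1) (w' 0)
    have hcons (v : Fin (n + 1) → Rˣ) (hv : IsSquare ((∏ i, v i) * ∏ i, Fin.tail w' i)) :
        (weightedSumSquares R (Fin.cons (w' 0) v : Fin (n + 2) → Rˣ)).Equivalent
          (weightedSumSquares R w') := by
      have htail := weightedSumSquares_units_equivalent h2 v (Fin.tail w') hv
      rw [← Fin.cons_self_tail w', Fin.cons_zero]
      exact ((weightedSumSquares_cons_equivalent _ _).trans (.prod (.refl _) htail)).trans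
        (weightedSumSquares_cons_equivalent _ _).symm
    have hbinary := weightedSumSquares_cons_cons_equivalent (Fin.tail (Fin.tail w)) hxy
    rw [show w 1 = Fin.tail w 0 from rfl, Fin.cons_self_tail, Fin.cons_self_tail] at hbinary
    refine hbinary.trans (hcons _ ?_)
    convert h using 1
    simp only [Fin.prod_univ_succ, Fin.cons_zero, Fin.cons_succ, Fin.tail]
    ac_rfl

end UnimodularClassification

section OrthogonalBasis

variable {R K M : Type*} [CommRing R] [Field K] [Algebra R K] [AddCommGroup M] [Module R M]

theorem two_smul_apply_eq_sub_sub {B : M →ₗ[R] M →ₗ[R] K} (hB : ∀ x y, B x y = B y x) (x y : M) :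
    (2 : R) • B x y = B (x + y) (x + y) - B x x - B y y := by
  simp only [map_add, LinearMap.add_apply, hB y x, two_smul]
  ring

theorem apply_mem_of_basis {ι : Type*} (b : Module.Basis ι R M) (B : M →ₗ[R] M →ₗ[R] K)
    (S : Submodule R K) (h : ∀ i j, B (b i) (b j) ∈ S) (x y : M) : B x y ∈ S := by
  have hzero : B.compr₂ S.mkQ = 0 :=
    b.ext fun i => b.ext fun j => by simpa using h i j
  simpa using LinearMap.congr_fun₂ hzero x y

variable [IsFractionRing R K]

theorem exists_forall_apply_mem_span_apply_self [IsDomain R] [ValuationRing R]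
    (h2 : IsUnit (2 : R)) {ι : Type*} [Finite ι] [Nonempty ι] (b : Module.Basis ι R M)
    {B : M →ₗ[R] M →ₗ[R] K} (hB : ∀ x y, B x y = B y x) :
    ∃ x, ∀ y z, B y z ∈ Submodule.span R {B x x} := by
  obtain ⟨⟨k, l⟩, hmax⟩ := Finite.exists_max fun ij : ι × ι =>
    ValuationRing.valuation R K (B (b ij.1 + b ij.2) (b ij.1 + b ij.2))
  have hadd (i j : ι) : B (b i + b j) (b i + b j) ∈
      Submodule.span R {B (b k + b l) (b k + b l)} :=
    Submodule.mem_span_singleton.2 (hmax (i, j))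
  have hcancel {a : K} (ha : (2 : R) • a ∈ Submodule.span R {B (b k + b l) (b k + b l)}) :
      a ∈ Submodule.span R {B (b k + b l) (b k + b l)} :=
    (Submodule.smul_mem_iff_of_isUnit _ h2).1 ha
  have hself (i : ι) : B (b i) (b i) ∈ Submodule.span R {B (b k + b l) (b k + b l)} :=
    hcancel (hcancel (by simpa [two_smul] using hadd i i))
  refine ⟨b k + b l, apply_mem_of_basis b B _ fun i j => hcancel ?_⟩
  rw [two_smul_apply_eq_sub_sub hB]
  exact sub_mem (sub_mem (hadd i j) (hself i)) (hself j)

theorem exists_basis_eq_cons {B : M →ₗ[R] M →ₗ[R] K} {x : M} (hxx : B x x ≠ 0)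
    (hx : ∀ z, B x z ∈ Submodule.span R {B x x}) {n : ℕ}
    (b : Module.Basis (Fin n) R (LinearMap.ker (B x))) :
    ∃ b' : Module.Basis (Fin (n + 1)) R M, ⇑b' = Fin.cons x (Subtype.val ∘ b) := by
  have hli (c : R) (z : M) (hz : z ∈ LinearMap.ker (B x)) (h : c • x + z = 0) : c = 0 := by
    have h := congrArg (B x) h
    rw [map_add, map_smul, LinearMap.mem_ker.1 hz, map_zero, add_zero, Algebra.smul_def] at h
    simpa [hxx] using h
  have hsp (z : M) : ∃ c : R, z + c • x ∈ LinearMap.ker (B x) := by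
    obtain ⟨c, hc⟩ := Submodule.mem_span_singleton.1 (hx z)
    exact ⟨-c, by simp [← hc]⟩
  exact ⟨.mkFinCons x b hli hsp, Module.Basis.coe_mkFinCons x b hli hsp⟩

theorem exists_basis_isOrthoᵢ [IsDomain R] [IsDiscreteValuationRing R] (h2 : IsUnit (2 : R))
    (n : ℕ) :
    ∀ (M : Type _) [AddCommGroup M] [Module R M] [Module.Finite R M] [Module.Free R M]
      (B : M →ₗ[R] M →ₗ[R] K), (∀ x y, B x y = B y x) → Module.finrank R M = n →
      ∃ b : Module.Basis (Fin n) R M, B.IsOrthoᵢ b := by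
  induction n with
  | zero =>
    intro M _ _ _ _ B _ hn
    exact ⟨Module.finBasisOfFinrankEq R M hn, fun i => i.elim0⟩
  | succ n ih =>
    intro M _ _ _ _ B hB hn
    obtain ⟨x, hx⟩ :=
      exists_forall_apply_mem_span_apply_self h2 (Module.finBasisOfFinrankEq R M hn) hB
    by_cases hxx : B x x = 0
    · refine ⟨Module.finBasisOfFinrankEq R M hn, fun i j _ => ?_⟩
      simpa [hxx] using hx _ _
    have hfinrank : Module.finrank R (LinearMap.ker (B x)) = n := by
      obtain ⟨b, -⟩ := exists_basis_eq_cons hxx (hx x) (Module.finBasis R _)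
      have hcard := Module.finrank_eq_card_basis b
      rw [hn, Fintype.card_fin] at hcard
      omega
    obtain ⟨b, hb⟩ := ih (LinearMap.ker (B x)) (B.domRestrict₁₂ _ _) (fun _ _ => hB _ _) hfinrank
    obtain ⟨b', hb'⟩ := exists_basis_eq_cons hxx (hx x) b
    have hker (i : Fin n) : B x (b i) = 0 := (b i).2
    refine ⟨b', LinearMap.isOrthoᵢ_def.2 fun i j hij => ?_⟩
    rw [hb']
    cases i using Fin.cases <;> cases j using Fin.cases
    · exact absurd rfl hij
    · exact hker _
    · exact (hB _ _).trans (hker _)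
    · exact hb fun h => hij (congrArg Fin.succ h)

end OrthogonalBasis

section DiagonalBasis

variable {R K M ι : Type*} [CommRing R] [Field K] [AddCommGroup M] [Module R M] [Module K M]
  [Fintype ι] [DecidableEq ι]

/-- `e` is an `R`-basis of the lattice `Λ` in which the bilinear form `B` is diagonal with diagonal
entries `w`. The basis is recorded as a `K`-basis of the ambient space whose `R`-span is `Λ`. -/
structure IsDiagonalBasis (B : LinearMap.BilinForm K M) (Λ : Submodule R M) (w : ι → K)
    (e : Module.Basis ι K M) : Prop where
  span_eq : Submodule.span R (Set.range e) = Λ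
  toMatrix_eq : LinearMap.BilinForm.toMatrix e B = Matrix.diagonal w

namespace IsDiagonalBasis

variable {B : LinearMap.BilinForm K M} {Λ : Submodule R M} {w : ι → K} {e : Module.Basis ι K M}

theorem apply_basis (h : IsDiagonalBasis B Λ w e) (i j : ι) :
    B (e i) (e j) = if i = j then w i else 0 := by
  rw [← LinearMap.BilinForm.toMatrix_apply, h.toMatrix_eq, Matrix.diagonal_apply]

theorem apply_basis_right (h : IsDiagonalBasis B Λ w e) (x : M) (i : ι) :
    B x (e i) = w i * e.repr x i := by
  conv_lhs => rw [← e.sum_repr x, map_sum, LinearMap.sum_apply]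
  simp [h.apply_basis, mul_comm]

theorem reindex (h : IsDiagonalBasis B Λ w e) {κ : Type*} [Fintype κ] [DecidableEq κ]
    (σ : ι ≃ κ) : IsDiagonalBasis B Λ (w ∘ σ.symm) (e.reindex σ) where
  span_eq := by rw [Module.Basis.range_reindex, h.span_eq]
  toMatrix_eq := by
    ext i j
    simp [h.apply_basis, Matrix.diagonal_apply]

variable [Algebra R K] [IsScalarTower R K M]

theorem mem_iff [IsDomain R] [Module.IsTorsionFree R K] (h : IsDiagonalBasis B Λ w e) {x : M} :
    x ∈ Λ ↔ ∀ i, e.repr x i ∈ (algebraMap R K).range := by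
  rw [← h.span_eq, e.mem_span_iff_repr_mem R]
  rfl

theorem mem_dualSubmodule_iff (h : IsDiagonalBasis B Λ w e) {x : M} :
    x ∈ B.dualSubmodule Λ ↔ ∀ i, w i * e.repr x i ∈ (algebraMap R K).range := by
  have hcomap : x ∈ B.dualSubmodule Λ ↔
      Λ ≤ Submodule.comap ((B x).restrictScalars R) (1 : Submodule R K) := Iff.rfl
  rw [hcomap, ← h.span_eq, Submodule.span_le, Set.range_subset_iff]
  simp [h.apply_basis_right]

end IsDiagonalBasis

theorem isDiagonalBasis_extendOfIsLattice [Algebra R K] [IsFractionRing R K] [IsScalarTower R K M]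
    {B : LinearMap.BilinForm K M} {Λ : Submodule R M} [Submodule.IsLattice K Λ]
    (b : Module.Basis ι R Λ) (hb : ∀ i j, i ≠ j → B (b i) (b j) = 0) :
    IsDiagonalBasis B Λ (fun i => B (b i) (b i)) (b.extendOfIsLattice K) where
  span_eq := by
    have hrange : Set.range (b.extendOfIsLattice K) = Λ.subtype '' Set.range b := by
      rw [← Set.range_comp]
      exact congrArg Set.range (funext fun i => b.extendOfIsLattice_apply K i)
    rw [hrange, Submodule.span_image, b.span_eq, Submodule.map_top, Submodule.range_subtype]
  toMatrix_eq := by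
    ext i j
    rw [LinearMap.BilinForm.toMatrix_apply, Matrix.diagonal_apply,
      b.extendOfIsLattice_apply K, b.extendOfIsLattice_apply K]
    split_ifs with hij
    · rw [hij]
    · exact hb i j hij

theorem exists_isDiagonalBasis [IsDomain R] [IsDiscreteValuationRing R] [Algebra R K]
    [IsFractionRing R K] [IsScalarTower R K M] (h2 : IsUnit (2 : R))
    {B : LinearMap.BilinForm K M} (hB : B.IsSymm) (Λ : Submodule R M) [Submodule.IsLattice K Λ] :
    ∃ (n : ℕ) (w : Fin n → K) (e : Module.Basis (Fin n) K M), IsDiagonalBasis B Λ w e := by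
  obtain ⟨b, hb⟩ := exists_basis_isOrthoᵢ h2 (Module.finrank R Λ) Λ
    ((B.restrictScalars₁₂ R R).domRestrict₁₂ Λ Λ) (fun x y => hB.eq x y) rfl
  exact ⟨_, _, _, isDiagonalBasis_extendOfIsLattice b fun i j hij => hb hij⟩

end DiagonalBasis

section VertexLattice

variable {R K M : Type*} [CommRing R] [Field K] [Algebra R K]

/-- The diagonal entries of a vertex lattice: the units `α` divided by `ϖ`, then the units `β`. -/
noncomputable def vertexWeight (K : Type*) [Field K] [Algebra R K] {τ κ : Type*} (ϖ : R)
    (α : τ → Rˣ) (β : κ → Rˣ) : τ ⊕ κ → K :=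
  Sum.elim (fun i => (algebraMap R K ϖ)⁻¹ * algebraMap R K (α i)) fun j => algebraMap R K (β j)

theorem inv_mul_mem_range_iff [FaithfulSMul R K] {ϖ : R} (hϖ : ϖ ≠ 0) {r : R} :
    (algebraMap R K ϖ)⁻¹ * algebraMap R K r ∈ (algebraMap R K).range ↔ ϖ ∣ r := by
  have hinj := FaithfulSMul.algebraMap_injective R K
  have hϖ0 : algebraMap R K ϖ ≠ 0 := (map_ne_zero_iff _ hinj).2 hϖ
  rw [RingHom.mem_range, dvd_def]
  refine exists_congr fun s => ?_
  rw [eq_inv_mul_iff_mul_eq₀ hϖ0, ← map_mul, hinj.eq_iff, eq_comm]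

theorem exists_unit_eq_or_eq_inv_mul [IsFractionRing R K] {ϖ : R} (hϖ : Irreducible ϖ) {w : K}
    (hw : algebraMap R K ϖ * w ∈ (algebraMap R K).range)
    (hw' : ∀ c, w * c ∈ (algebraMap R K).range → c ∈ (algebraMap R K).range) :
    ∃ u : Rˣ, w = (algebraMap R K ϖ)⁻¹ * algebraMap R K u ∨ w = algebraMap R K u := by
  have hinj := IsFractionRing.injective R K
  have hϖ0 : algebraMap R K ϖ ≠ 0 := (map_ne_zero_iff _ hinj).2 hϖ.ne_zero
  have hw0 : w ≠ 0 := by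
    rintro rfl
    obtain ⟨r, hr⟩ := hw' (algebraMap R K ϖ)⁻¹ (by simp)
    refine hϖ.not_isUnit (.of_mul_eq_one r (hinj ?_))
    rw [map_mul, hr, mul_inv_cancel₀ hϖ0, map_one]
  obtain ⟨a, ha⟩ := hw
  obtain ⟨b, hb⟩ := hw' w⁻¹ (by rw [mul_inv_cancel₀ hw0]; exact one_mem _)
  have hab : ϖ = a * b := hinj (by rw [map_mul, ha, hb, mul_inv_cancel_right₀ hw0])
  rcases hϖ.isUnit_or_isUnit hab with ⟨u, rfl⟩ | ⟨u, rfl⟩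
  · exact ⟨u, .inl (by rw [ha, inv_mul_cancel_left₀ hϖ0])⟩
  · refine ⟨u⁻¹, .inr (mul_right_cancel₀ (inv_ne_zero hw0) ?_)⟩
    rw [mul_inv_cancel₀ hw0, ← hb, ← map_mul, Units.inv_mul, map_one]

variable [AddCommGroup M] [Module R M] [Module K M]

theorem repr_linearCombination [IsScalarTower R K M] {ι : Type*} [Fintype ι]
    (e : Module.Basis ι K M) (ξ : ι → R) (i : ι) :
    e.repr (Fintype.linearCombination R e ξ) i = algebraMap R K (ξ i) := by
  have h : Fintype.linearCombination R e ξ = ∑ j, algebraMap R K (ξ j) • e j := by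
    simp only [Fintype.linearCombination_apply, algebraMap_smul]
  rw [h, e.repr_sum_self]

theorem linearCombination_injective [IsScalarTower R K M] [FaithfulSMul R K] {ι : Type*}
    [Fintype ι] (e : Module.Basis ι K M) : Function.Injective (Fintype.linearCombination R e) :=
  fun ξ η h => funext fun i => FaithfulSMul.algebraMap_injective R K (by
    rw [← repr_linearCombination e, h, repr_linearCombination])

theorem IsDiagonalBasis.exists_vertexWeight {ι : Type*} [Fintype ι] [DecidableEq ι]
    {B : LinearMap.BilinForm K M} {Λ : Submodule R M} {w : ι → K} {e : Module.Basis ι K M}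
    (h : IsDiagonalBasis B Λ w e) {ϖ : R}
    (hw : ∀ i, ∃ u : Rˣ, w i = (algebraMap R K ϖ)⁻¹ * algebraMap R K u ∨ w i = algebraMap R K u) :
    ∃ (k m : ℕ) (α : Fin k → Rˣ) (β : Fin m → Rˣ) (e : Module.Basis (Fin k ⊕ Fin m) K M),
      IsDiagonalBasis B Λ (vertexWeight K ϖ α β) e := by
  classical
  choose u hu using hw
  let P : ι → Prop := fun i => w i = (algebraMap R K ϖ)⁻¹ * algebraMap R K (u i)
  let σ := (Equiv.sumCompl P).symm.trans
    ((Fintype.equivFin {i // P i}).sumCongr (Fintype.equivFin {i // ¬P i}))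
  refine ⟨_, _, fun i => u (σ.symm (Sum.inl i)), fun j => u (σ.symm (Sum.inr j)), e.reindex σ, ?_⟩
  convert h.reindex σ using 1
  ext (i | j)
  · exact ((Fintype.equivFin {i // P i}).symm i).2.symm
  · exact ((hu _).resolve_left ((Fintype.equivFin {i // ¬P i}).symm j).2).symm

namespace IsDiagonalBasis

variable [IsScalarTower R K M] {ι : Type*} [Fintype ι] [DecidableEq ι]
  {B : LinearMap.BilinForm K M} {Λ : Submodule R M} {w : ι → K} {e : Module.Basis ι K M}

theorem linearCombination_mem_dualSubmodule_iff (h : IsDiagonalBasis B Λ w e) {ξ : ι → R} :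
    Fintype.linearCombination R e ξ ∈ B.dualSubmodule Λ ↔
      ∀ i, w i * algebraMap R K (ξ i) ∈ (algebraMap R K).range := by
  simp only [h.mem_dualSubmodule_iff, repr_linearCombination]

theorem mem_range_of_mul_mem_range [IsDomain R] [Module.IsTorsionFree R K]
    (h : IsDiagonalBasis B Λ w e)
    (hle : B.dualSubmodule Λ ≤ Λ) (i : ι) {c : K} (hc : w i * c ∈ (algebraMap R K).range) :
    c ∈ (algebraMap R K).range := by
  have hdual : c • e i ∈ B.dualSubmodule Λ := by
    rw [h.mem_dualSubmodule_iff]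
    intro j
    by_cases hij : i = j
    · subst hij
      simpa using hc
    · simp [hij]
  simpa using h.mem_iff.1 (hle hdual) i

end IsDiagonalBasis

/-- `Λ` is a vertex lattice of type `k`: `ϖ Λ ⊆ Λ^∨ ⊆ Λ`, where `Λ / Λ^∨` has dimension `k` over
the residue field of `R`. For a finite residue field the dimension condition is encoded by the
index of `Λ^∨` in `Λ`. -/
structure IsVertexLattice [IsLocalRing R] [IsScalarTower R K M] (ϖ : R)
    (B : LinearMap.BilinForm K M) (k : ℕ) (Λ : Submodule R M) : Prop where
  isLattice : Submodule.IsLattice K Λ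
  smul_mem : ∀ x ∈ Λ, ϖ • x ∈ B.dualSubmodule Λ
  dual_le : B.dualSubmodule Λ ≤ Λ
  relIndex_eq : (B.dualSubmodule Λ).toAddSubgroup.relIndex Λ.toAddSubgroup =
    Nat.card (IsLocalRing.ResidueField R) ^ k

variable [IsDomain R] [IsDiscreteValuationRing R] [IsFractionRing R K] [IsScalarTower R K M]
  {B : LinearMap.BilinForm K M} {Λ : Submodule R M}

theorem inv_mul_unit_mul_mem_range_iff {ϖ : R} (hϖ : Irreducible ϖ) (u : Rˣ) (r : R) :
    (algebraMap R K ϖ)⁻¹ * algebraMap R K u * algebraMap R K r ∈ (algebraMap R K).range ↔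
      IsLocalRing.residue R r = 0 := by
  rw [IsLocalRing.residue_eq_zero_iff, hϖ.maximalIdeal_eq, Ideal.mem_span_singleton, mul_assoc,
    ← map_mul, inv_mul_mem_range_iff hϖ.ne_zero, u.isUnit.dvd_mul_left]

theorem IsDiagonalBasis.linearCombination_mem_dualSubmodule_iff_residue {τ κ : Type*} [Fintype τ]
    [Fintype κ] [DecidableEq τ] [DecidableEq κ] {ϖ : R} (hϖ : Irreducible ϖ) {α : τ → Rˣ}
    {β : κ → Rˣ} {e : Module.Basis (τ ⊕ κ) K M}
    (h : IsDiagonalBasis B Λ (vertexWeight K ϖ α β) e) {ξ : τ ⊕ κ → R} :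
    Fintype.linearCombination R e ξ ∈ B.dualSubmodule Λ ↔
      ∀ i, IsLocalRing.residue R (ξ (Sum.inl i)) = 0 := by
  have hunit (j : κ) : algebraMap R K (β j) * algebraMap R K (ξ (Sum.inr j)) ∈
      (algebraMap R K).range := ⟨β j * ξ (Sum.inr j), map_mul _ _ _⟩
  rw [h.linearCombination_mem_dualSubmodule_iff, Sum.forall]
  simp only [vertexWeight, Sum.elim_inl, Sum.elim_inr, inv_mul_unit_mul_mem_range_iff hϖ, hunit,
    implies_true, and_true]

theorem IsDiagonalBasis.relIndex_dualSubmodule {τ κ : Type*} [Fintype τ] [Fintype κ]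
    [DecidableEq τ] [DecidableEq κ] {ϖ : R} (hϖ : Irreducible ϖ) {α : τ → Rˣ} {β : κ → Rˣ}
    {e : Module.Basis (τ ⊕ κ) K M} (h : IsDiagonalBasis B Λ (vertexWeight K ϖ α β) e)
    (hle : B.dualSubmodule Λ ≤ Λ) :
    (B.dualSubmodule Λ).toAddSubgroup.relIndex Λ.toAddSubgroup =
      Nat.card (IsLocalRing.ResidueField R) ^ Fintype.card τ := by
  let coord : (τ ⊕ κ → R) →+ M := (Fintype.linearCombination R e).toAddMonoidHom
  let red : (τ ⊕ κ → R) →+ (τ → IsLocalRing.ResidueField R) :=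
    (((Algebra.linearMap R (IsLocalRing.ResidueField R)).compLeft τ).comp
      (LinearMap.funLeft R R Sum.inl)).toAddMonoidHom
  have hred : Function.Surjective red :=
    (IsLocalRing.residue_surjective.comp_left).comp
      (LinearMap.funLeft_surjective_of_injective R R _ Sum.inl_injective)
  have hΛ : Λ.toAddSubgroup = AddSubgroup.map coord ⊤ := by
    ext x
    simp [coord, ← h.span_eq, ← Fintype.range_linearCombination]
  have hker (ξ : τ ⊕ κ → R) : coord ξ ∈ B.dualSubmodule Λ ↔ ξ ∈ red.ker :=
    (h.linearCombination_mem_dualSubmodule_iff_residue hϖ).trans funext_iff.symm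
  have hdual : (B.dualSubmodule Λ).toAddSubgroup = AddSubgroup.map coord red.ker := by
    ext x
    refine ⟨fun hx => ?_, ?_⟩
    · obtain ⟨ξ, -, rfl⟩ := hΛ.le (hle hx)
      exact ⟨ξ, (hker ξ).1 hx, rfl⟩
    · rintro ⟨ξ, hξ, rfl⟩
      exact (hker ξ).2 hξ
  rw [hΛ, hdual, AddSubgroup.relIndex_map_map_of_injective _ _ (linearCombination_injective e),
    AddSubgroup.relIndex_top_right, AddSubgroup.index_ker, AddMonoidHom.range_eq_top.2 hred,
    Nat.card_congr AddSubgroup.topEquiv.toEquiv, Nat.card_fun, Nat.card_eq_fintype_card (α := τ)]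

theorem IsVertexLattice.exists_isDiagonalBasis [Finite (IsLocalRing.ResidueField R)]
    (h2 : IsUnit (2 : R)) {ϖ : R} (hϖ : Irreducible ϖ) (hB : B.IsSymm) {k : ℕ}
    (hΛ : IsVertexLattice ϖ B k Λ) :
    ∃ (m : ℕ) (α : Fin k → Rˣ) (β : Fin m → Rˣ) (e : Module.Basis (Fin k ⊕ Fin m) K M),
      IsDiagonalBasis B Λ (vertexWeight K ϖ α β) e := by
  have := hΛ.isLattice
  obtain ⟨n, w, e, he⟩ := _root_.exists_isDiagonalBasis h2 hB Λ
  have hϖw (i : Fin n) : algebraMap R K ϖ * w i ∈ (algebraMap R K).range := by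
    have hei : e i ∈ Λ := he.span_eq ▸ Submodule.subset_span ⟨i, rfl⟩
    have h := he.mem_dualSubmodule_iff.1 (hΛ.smul_mem _ hei) i
    rwa [← algebraMap_smul K, map_smul, Finsupp.smul_apply, e.repr_self, Finsupp.single_eq_same,
      smul_eq_mul, mul_one, mul_comm] at h
  obtain ⟨k', m, α, β, e', he'⟩ := he.exists_vertexWeight fun i =>
    exists_unit_eq_or_eq_inv_mul hϖ (hϖw i) fun c => he.mem_range_of_mul_mem_range hΛ.dual_le i
  have hk : k' = k := by
    have hq : 1 < Nat.card (IsLocalRing.ResidueField R) := Finite.one_lt_card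
    rw [← Nat.pow_right_inj hq, ← hΛ.relIndex_eq, he'.relIndex_dualSubmodule hϖ hΛ.dual_le,
      Fintype.card_fin]
  subst hk
  exact ⟨m, α, β, e', he'⟩

end VertexLattice

section CovByChain

variable {R M : Type*} [CommRing R] [IsLocalRing R] [AddCommGroup M] [Module R M]

theorem relIndex_of_covBy {N P : Submodule R M} (h : N ⋖ P) :
    N.toAddSubgroup.relIndex P.toAddSubgroup = Nat.card (IsLocalRing.ResidueField R) := by
  obtain ⟨I, hI, ⟨φ⟩⟩ := isSimpleModule_iff_quot_maximal.1 ((covBy_iff_quot_is_simple h.le).1 h)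
  obtain rfl := IsLocalRing.eq_maximalIdeal hI
  exact Nat.card_congr φ.toEquiv

theorem relIndex_of_covBy_chain {k : ℕ} (f : Fin (k + 1) → Submodule R M)
    (hf : ∀ i : Fin k, f i.castSucc ⋖ f i.succ) :
    (f 0).toAddSubgroup.relIndex (f (Fin.last k)).toAddSubgroup =
      Nat.card (IsLocalRing.ResidueField R) ^ k := by
  have hmono : Monotone f := Fin.monotone_iff_le_succ.2 fun i => (hf i).le
  induction k with
  | zero => simp
  | succ k ih =>
    have hinit := ih (fun i => f i.castSucc) (fun i => hf i.castSucc)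
      (hmono.comp Fin.strictMono_castSucc.monotone)
    rw [← AddSubgroup.relIndex_mul_relIndex _ (f (Fin.last k).castSucc).toAddSubgroup _
      (hmono (Fin.zero_le _)) (hmono (Fin.le_last _)), ← Fin.succ_last, relIndex_of_covBy (hf _),
      pow_succ]
    exact congrArg (· * _) hinit

end CovByChain

section ChangeOfBasis

variable {R K M ι : Type*} [CommRing R] [Field K] [AddCommGroup M] [Module R M] [Module K M]
  [DecidableEq ι] {B : LinearMap.BilinForm K M}

/-- The basis obtained from `e` by changing the sign of `e i`. -/
noncomputable def negBasis (e : Module.Basis ι K M) (i : ι) : Module.Basis ι K M :=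
  e.unitsSMul (Function.update 1 i (-1))

theorem coe_negBasis (e : Module.Basis ι K M) (i : ι) :
    ⇑(negBasis e i) = Function.update e i (-e i) := by
  ext j
  rw [negBasis, Module.Basis.unitsSMul_apply]
  by_cases hj : j = i
  · subst hj
    simp
  · simp [hj]

variable [Fintype ι]

theorem det_negBasis (e e' : Module.Basis ι K M) (i : ι) :
    e.det (negBasis e' i) = -e.det e' := by
  rw [coe_negBasis, AlternatingMap.map_update_neg, Function.update_eq_self]

namespace IsDiagonalBasis

variable {Λ Λ' : Submodule R M} {w w' : ι → K} {e e' : Module.Basis ι K M}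

theorem isDiagonalBasis_negBasis (h : IsDiagonalBasis B Λ w e) (i : ι) :
    IsDiagonalBasis B Λ w (negBasis e i) where
  span_eq := by
    have hmem (j : ι) : negBasis e i j ∈ Submodule.span R (Set.range e) ∧
        e j ∈ Submodule.span R (Set.range (negBasis e i)) := by
      have he := Submodule.subset_span (R := R) (Set.mem_range_self (f := e) j)
      have hneg := Submodule.subset_span (R := R) (Set.mem_range_self (f := negBasis e i) j)
      by_cases hj : j = i <;> simp_all [coe_negBasis]
    rw [← h.span_eq]
    exact le_antisymm (Submodule.span_le.2 (Set.range_subset_iff.2 fun j => (hmem j).1))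
      (Submodule.span_le.2 (Set.range_subset_iff.2 fun j => (hmem j).2))
  toMatrix_eq := by
    ext j k
    rw [LinearMap.BilinForm.toMatrix_apply, Matrix.diagonal_apply, coe_negBasis]
    by_cases hj : j = i <;> by_cases hk : k = i <;> simp_all [h.apply_basis, eq_comm]

theorem prod_eq_det_sq_mul_prod (h : IsDiagonalBasis B Λ w e) (h' : IsDiagonalBasis B Λ' w' e') :
    ∏ i, w' i = e.det e' ^ 2 * ∏ i, w i := by
  have hdet := congrArg Matrix.det (LinearMap.BilinForm.toMatrix_mul_basis_toMatrix e e' B)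
  rw [h.toMatrix_eq, h'.toMatrix_eq, Matrix.det_mul, Matrix.det_mul, Matrix.det_transpose,
    Matrix.det_diagonal, Matrix.det_diagonal, ← e.det_apply] at hdet
  rw [← hdet]
  ring

theorem det_eq_one_or_neg_one (h : IsDiagonalBasis B Λ w e) (h' : IsDiagonalBasis B Λ' w e')
    (hw : ∀ i, w i ≠ 0) : e.det e' = 1 ∨ e.det e' = -1 := by
  have hprod : ∏ i, w i ≠ 0 := Finset.prod_ne_zero_iff.2 fun i _ => hw i
  rw [← sq_eq_one_iff]
  exact mul_right_cancel₀ hprod (by rw [← h.prod_eq_det_sq_mul_prod h', one_mul])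

theorem apply_equiv_apply_equiv (h : IsDiagonalBasis B Λ w e) (h' : IsDiagonalBasis B Λ' w e')
    (x y : M) : B (e.equiv e' (.refl ι) x) (e.equiv e' (.refl ι) y) = B x y := by
  have hcomp : B.compl₁₂ (e.equiv e' (.refl ι) : M →ₗ[K] M) (e.equiv e' (.refl ι)) = B :=
    e.ext fun i => e.ext fun j => by simp [h.apply_basis, h'.apply_basis]
  exact LinearMap.congr_fun₂ hcomp x y

variable [Algebra R K] [IsScalarTower R K M]

theorem equiv_image (h : IsDiagonalBasis B Λ w e) (h' : IsDiagonalBasis B Λ' w e') :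
    e.equiv e' (.refl ι) '' (Λ : Set M) = Λ' := by
  let g := (e.equiv e' (.refl ι) : M →ₗ[K] M).restrictScalars R
  have hmap : Submodule.map g Λ = Λ' := by
    rw [← h.span_eq, ← h'.span_eq, Submodule.map_span, ← Set.range_comp]
    exact congrArg _ (congrArg Set.range (funext fun i => e.equiv_apply i e' (.refl ι)))
  exact congrArg SetLike.coe hmap

theorem isLattice (h : IsDiagonalBasis B Λ w e) : Submodule.IsLattice K Λ where
  fg := h.span_eq ▸ Submodule.fg_span (Set.finite_range e)
  span_eq_top := by rw [← h.span_eq, Submodule.span_span_of_tower, e.span_eq]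

theorem apply_linearCombination_right (h : IsDiagonalBasis B Λ w e) (x : M) (ξ : ι → R) :
    B x (Fintype.linearCombination R e ξ) = ∑ i, w i * (e.repr x i * algebraMap R K (ξ i)) := by
  simp [Fintype.linearCombination_apply, ← algebraMap_smul K, h.apply_basis_right, mul_comm,
    mul_left_comm]

theorem apply_linearCombination (h : IsDiagonalBasis B Λ w e) (ξ η : ι → R) :
    B (Fintype.linearCombination R e ξ) (Fintype.linearCombination R e η) =
      ∑ i, w i * algebraMap R K (ξ i * η i) := by
  simp only [h.apply_linearCombination_right, repr_linearCombination, map_mul]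

theorem exists_of_linearEquiv [IsFractionRing R K] (h2 : (2 : K) ≠ 0)
    (h : IsDiagonalBasis B Λ w e) (φ : (ι → R) ≃ₗ[R] (ι → R))
    (hφ : ∀ ξ, ∑ i, w' i * algebraMap R K (φ ξ i ^ 2) = ∑ i, w i * algebraMap R K (ξ i ^ 2)) :
    ∃ e', IsDiagonalBasis B Λ w' e' := by
  have hpolar (ξ η : ι → R) : ∑ i, w' i * algebraMap R K (φ ξ i * φ η i) =
      ∑ i, w i * algebraMap R K (ξ i * η i) := by
    have hsum := hφ (ξ + η)
    simp only [map_add, Pi.add_apply, add_sq, mul_add, Finset.sum_add_distrib, hφ] at hsum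
    refine mul_left_cancel₀ h2 ?_
    simpa [Finset.mul_sum, mul_left_comm, mul_assoc, map_ofNat] using hsum
  let coord : (ι → R) ≃ₗ[R] Λ :=
    (LinearEquiv.ofInjective _ (linearCombination_injective e)).trans
      (LinearEquiv.ofEq _ _ (by rw [Fintype.range_linearCombination, h.span_eq]))
  let b : Module.Basis ι R Λ := (Pi.basisFun R ι).map (φ.symm.trans coord)
  have hb (i j : ι) : B (b i) (b j) = if i = j then w' i else 0 := by
    have hbB : B (b i) (b j) = _ := h.apply_linearCombination _ _
    rw [hbB, ← hpolar]
    rcases eq_or_ne i j with rfl | hij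
    · simp [Pi.single_apply, apply_ite (algebraMap R K)]
    · simp [Pi.single_apply, apply_ite (algebraMap R K), hij, hij.symm]
  have := h.isLattice
  refine ⟨b.extendOfIsLattice K, ?_⟩
  convert isDiagonalBasis_extendOfIsLattice b fun i j hij => (hb i j).trans (if_neg hij)
  exact (if_pos rfl).symm.trans (hb _ _).symm

end IsDiagonalBasis

end ChangeOfBasis

section VertexLatticeMatching

variable {R K M τ κ : Type*} [CommRing R] [Field K] [Algebra R K]

theorem prod_vertexWeight [Fintype τ] [Fintype κ] (ϖ : R) (α : τ → Rˣ) (β : κ → Rˣ) :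
    ∏ i, vertexWeight K ϖ α β i = (algebraMap R K ϖ)⁻¹ ^ Fintype.card τ *
      algebraMap R K ((∏ i, α i) * ∏ j, β j : Rˣ) := by
  simp [vertexWeight, Finset.prod_mul_distrib, mul_assoc]

theorem sum_vertexWeight_mul_sq [Fintype τ] [Fintype κ] (ϖ : R) (α : τ → Rˣ) (β : κ → Rˣ)
    (ξ : τ ⊕ κ → R) :
    ∑ i, vertexWeight K ϖ α β i * algebraMap R K (ξ i ^ 2) =
      (algebraMap R K ϖ)⁻¹ * algebraMap R K (weightedSumSquares R α (ξ ∘ Sum.inl)) +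
        algebraMap R K (weightedSumSquares R β (ξ ∘ Sum.inr)) := by
  simp [vertexWeight, weightedSumSquares_apply, Units.smul_def, Finset.mul_sum, mul_assoc, pow_two]

variable [IsFractionRing R K]

theorem isSquare_of_isSquare_algebraMap [IsIntegrallyClosed R] {u : Rˣ}
    (h : IsSquare (algebraMap R K u)) : IsSquare u := by
  obtain ⟨x, hx⟩ := (isSquare_iff_exists_sq _).1 h
  obtain ⟨r, rfl⟩ := IsIntegrallyClosed.exists_algebraMap_eq_of_isIntegral_pow (R := R) two_pos
    (hx ▸ isIntegral_algebraMap)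
  have hr : (u : R) = r ^ 2 := IsFractionRing.injective R K (by rw [hx, map_pow])
  have hunit : IsUnit r := (isUnit_pow_iff two_ne_zero).1 (hr ▸ u.isUnit)
  exact (isSquare_iff_exists_sq _).2 ⟨hunit.unit, by ext; simp [hr]⟩

theorem vertexWeight_ne_zero {ϖ : R} (hϖ : ϖ ≠ 0) (α : τ → Rˣ) (β : κ → Rˣ)
    (i : τ ⊕ κ) : vertexWeight K ϖ α β i ≠ 0 := by
  have hϖ0 : algebraMap R K ϖ ≠ 0 := (map_ne_zero_iff _ (IsFractionRing.injective R K)).2 hϖ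
  have hunit (u : Rˣ) : algebraMap R K u ≠ 0 := (u.isUnit.map (algebraMap R K)).ne_zero
  cases i
  · exact mul_ne_zero (inv_ne_zero hϖ0) (hunit _)
  · exact hunit _

variable [AddCommGroup M] [Module R M] [Module K M] [Fintype τ] [Fintype κ]
  [DecidableEq τ] [DecidableEq κ] {B : LinearMap.BilinForm K M} {Λ Λ' : Submodule R M}
  {ϖ : R} {α α' : τ → Rˣ} {β β' : κ → Rˣ} {e e' : Module.Basis (τ ⊕ κ) K M}

theorem isSquare_prod_mul_prod [IsIntegrallyClosed R] (hϖ : ϖ ≠ 0)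
    (h : IsDiagonalBasis B Λ (vertexWeight K ϖ α β) e)
    (h' : IsDiagonalBasis B Λ' (vertexWeight K ϖ α' β') e')
    (hα : IsSquare ((∏ i, α i) * ∏ i, α' i)) : IsSquare ((∏ j, β j) * ∏ j, β' j) := by
  have hϖ0 : algebraMap R K ϖ ≠ 0 := (map_ne_zero_iff _ (IsFractionRing.injective R K)).2 hϖ
  have hdet := h.prod_eq_det_sq_mul_prod h'
  rw [prod_vertexWeight, prod_vertexWeight, mul_left_comm] at hdet
  have hdet := mul_left_cancel₀ (pow_ne_zero _ (inv_ne_zero hϖ0)) hdet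
  have hsq : IsSquare (((∏ i, α i) * ∏ j, β j) * ((∏ i, α' i) * ∏ j, β' j)) := by
    refine isSquare_of_isSquare_algebraMap (K := K) ?_
    rw [Units.val_mul, map_mul, hdet]
    exact ⟨e.det e' * algebraMap R K ((∏ i, α i) * ∏ j, β j : Rˣ), by ring⟩
  rw [mul_mul_mul_comm] at hsq
  simpa only [inv_mul_cancel_left] using hα.inv.mul hsq

variable [IsScalarTower R K M]

theorem IsDiagonalBasis.exists_of_weightedSumSquares_equivalent (h2 : (2 : K) ≠ 0)
    (h : IsDiagonalBasis B Λ (vertexWeight K ϖ α β) e)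
    (hα : (weightedSumSquares R α).Equivalent (weightedSumSquares R α'))
    (hβ : (weightedSumSquares R β).Equivalent (weightedSumSquares R β')) :
    ∃ e', IsDiagonalBasis B Λ (vertexWeight K ϖ α' β') e' := by
  obtain ⟨φ⟩ := hα
  obtain ⟨ψ⟩ := hβ
  let split := LinearEquiv.sumArrowLequivProdArrow τ κ R R
  refine h.exists_of_linearEquiv h2
    (split.trans ((φ.toLinearEquiv.prodCongr ψ.toLinearEquiv).trans split.symm)) fun ξ => ?_
  rw [sum_vertexWeight_mul_sq, sum_vertexWeight_mul_sq, ← φ.map_app (ξ ∘ Sum.inl),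
    ← ψ.map_app (ξ ∘ Sum.inr)]
  rfl

theorem IsDiagonalBasis.exists_of_isSquare_prod_mul_prod [IsIntegrallyClosed R]
    [HenselianLocalRing R] [Finite (IsLocalRing.ResidueField R)] (h2 : IsUnit (2 : R))
    (hϖ : ϖ ≠ 0) {k m : ℕ} {α α' : Fin k → Rˣ} {β β' : Fin m → Rˣ}
    {e e' : Module.Basis (Fin k ⊕ Fin m) K M}
    (h : IsDiagonalBasis B Λ (vertexWeight K ϖ α β) e)
    (h' : IsDiagonalBasis B Λ' (vertexWeight K ϖ α' β') e')
    (hα : IsSquare ((∏ i, α i) * ∏ i, α' i)) :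
    ∃ e'', IsDiagonalBasis B Λ (vertexWeight K ϖ α' β') e'' := by
  have h2K : (2 : K) ≠ 0 := by simpa only [map_ofNat] using (h2.map (algebraMap R K)).ne_zero
  exact h.exists_of_weightedSumSquares_equivalent h2K
    (weightedSumSquares_units_equivalent h2 α α' hα)
    (weightedSumSquares_units_equivalent h2 β β' (isSquare_prod_mul_prod hϖ h h' hα))

end VertexLatticeMatching

section LineLattice

variable {R M κ : Type*} [CommRing R] [Fintype κ] [AddCommGroup M] [Module R M]

/-- The `R`-span of a family `v` cut down by `ξ₀ ≡ t ξ₁ (mod ϖ)` on the first two coordinates. If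
`v` is a diagonal basis of a vertex lattice `Λ` of type 2, then this is the preimage of the line
through `t v₀ + v₁` in `Λ / Λ^∨`. -/
def lineLattice (ϖ t : R) (v : Fin 2 ⊕ κ → M) : Submodule R M :=
  Submodule.map (Fintype.linearCombination R v)
    (Submodule.comap (LinearMap.proj (Sum.inl 0) - t • LinearMap.proj (Sum.inl 1))
      (Ideal.span {ϖ}))

theorem mem_lineLattice_iff {ϖ t : R} {v : Fin 2 ⊕ κ → M} {x : M} :
    x ∈ lineLattice ϖ t v ↔
      ∃ ξ, ϖ ∣ ξ (Sum.inl 0) - t * ξ (Sum.inl 1) ∧ Fintype.linearCombination R v ξ = x := by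
  simp only [lineLattice, Submodule.mem_map, Submodule.mem_comap, Ideal.mem_span_singleton,
    LinearMap.sub_apply, LinearMap.smul_apply, LinearMap.proj_apply, smul_eq_mul]

theorem map_lineLattice {N : Type*} [AddCommGroup N] [Module R N] (f : M →ₗ[R] N) (ϖ t : R)
    (v : Fin 2 ⊕ κ → M) : (lineLattice ϖ t v).map f = lineLattice ϖ t (f ∘ v) := by
  rw [lineLattice, ← Submodule.map_comp, lineLattice]
  congr 1
  ext
  simp [Fintype.linearCombination_apply]

theorem linearCombination_update_neg {ι : Type*} [Fintype ι] [DecidableEq ι] (v : ι → M) (i : ι)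
    (ξ : ι → R) : Fintype.linearCombination R (Function.update v i (-v i)) ξ =
      Fintype.linearCombination R v (Function.update ξ i (-ξ i)) := by
  simp only [Fintype.linearCombination_apply]
  refine Finset.sum_congr rfl fun j _ => ?_
  by_cases hj : j = i
  · subst hj
    simp
  · simp [hj]

variable [DecidableEq κ]

theorem lineLattice_update_neg_inl (ϖ t : R) (v : Fin 2 ⊕ κ → M) :
    lineLattice ϖ t (Function.update v (Sum.inl 1) (-v (Sum.inl 1))) = lineLattice ϖ (-t) v := by
  have hle (t : R) (v : Fin 2 ⊕ κ → M) :
      lineLattice ϖ t (Function.update v (Sum.inl 1) (-v (Sum.inl 1))) ≤ lineLattice ϖ (-t) v := by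
    intro x hx
    obtain ⟨ξ, hξ, rfl⟩ := mem_lineLattice_iff.1 hx
    rw [linearCombination_update_neg]
    exact mem_lineLattice_iff.2 ⟨_, by simpa using hξ, rfl⟩
  refine le_antisymm (hle t v) ?_
  simpa using hle (-t) (Function.update v (Sum.inl 1) (-v (Sum.inl 1)))

theorem lineLattice_update_neg_inr (ϖ t : R) (v : Fin 2 ⊕ κ → M) (j : κ) :
    lineLattice ϖ t (Function.update v (Sum.inr j) (-v (Sum.inr j))) = lineLattice ϖ t v := by
  have hle (v : Fin 2 ⊕ κ → M) :
      lineLattice ϖ t (Function.update v (Sum.inr j) (-v (Sum.inr j))) ≤ lineLattice ϖ t v := by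
    intro x hx
    obtain ⟨ξ, hξ, rfl⟩ := mem_lineLattice_iff.1 hx
    rw [linearCombination_update_neg]
    exact mem_lineLattice_iff.2 ⟨_, by simpa using hξ, rfl⟩
  refine le_antisymm (hle v) ?_
  simpa using hle (Function.update v (Sum.inr j) (-v (Sum.inr j)))

end LineLattice

section SelfDual

variable {R K M κ : Type*} [CommRing R] [Field K] [Algebra R K]
  [AddCommGroup M] [Module R M] [Module K M] [Fintype κ] [DecidableEq κ]
  {B : LinearMap.BilinForm K M} {Λ L : Submodule R M} {ϖ t : R} {α : Fin 2 → Rˣ} {β : κ → Rˣ}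
  {e : Module.Basis (Fin 2 ⊕ κ) K M}

namespace IsDiagonalBasis

variable [FaithfulSMul R K] [IsScalarTower R K M]

theorem apply_linearCombination_mem_range_iff (hϖ : ϖ ≠ 0)
    (h : IsDiagonalBasis B Λ (vertexWeight K ϖ α β) e) (ξ η : Fin 2 ⊕ κ → R) :
    B (Fintype.linearCombination R e ξ) (Fintype.linearCombination R e η) ∈
        (algebraMap R K).range ↔
      ϖ ∣ α 0 * (ξ (Sum.inl 0) * η (Sum.inl 0)) + α 1 * (ξ (Sum.inl 1) * η (Sum.inl 1)) := by
  have hsplit : B (Fintype.linearCombination R e ξ) (Fintype.linearCombination R e η) =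
      (algebraMap R K ϖ)⁻¹ * algebraMap R K
          (α 0 * (ξ (Sum.inl 0) * η (Sum.inl 0)) + α 1 * (ξ (Sum.inl 1) * η (Sum.inl 1))) +
        algebraMap R K (∑ j, β j * (ξ (Sum.inr j) * η (Sum.inr j))) := by
    rw [h.apply_linearCombination, Fintype.sum_sum_type, Fin.sum_univ_two]
    simp [vertexWeight, mul_add, mul_assoc]
  rw [hsplit, add_mem_cancel_right (RingHom.mem_range_self _ _), inv_mul_mem_range_iff hϖ]

theorem lineLattice_le_dualSubmodule (hϖ : ϖ ≠ 0)
    (h : IsDiagonalBasis B Λ (vertexWeight K ϖ α β) e) (ht : ϖ ∣ α 0 * t ^ 2 + α 1) :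
    lineLattice ϖ t e ≤ B.dualSubmodule (lineLattice ϖ t e) := by
  intro x hx y hy
  obtain ⟨ξ, ⟨c, hc⟩, rfl⟩ := mem_lineLattice_iff.1 hx
  obtain ⟨η, ⟨d, hd⟩, rfl⟩ := mem_lineLattice_iff.1 hy
  obtain ⟨s, hs⟩ := ht
  refine Submodule.mem_one.2 ((h.apply_linearCombination_mem_range_iff hϖ ξ η).2 ?_)
  rw [sub_eq_iff_eq_add] at hc hd
  refine ⟨s * (ξ (Sum.inl 1) * η (Sum.inl 1)) +
    α 0 * (c * η (Sum.inl 0) + t * ξ (Sum.inl 1) * d), ?_⟩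
  rw [hc, hd]
  linear_combination ξ (Sum.inl 1) * η (Sum.inl 1) * hs

theorem mem_of_mem_dualSubmodule_lineLattice [IsDomain R] (hϖ : ϖ ≠ 0)
    (h : IsDiagonalBasis B Λ (vertexWeight K ϖ α β) e) {x : M}
    (hx : x ∈ B.dualSubmodule (lineLattice ϖ t e)) : x ∈ Λ := by
  have hϖ0 : algebraMap R K ϖ ≠ 0 :=
    (map_ne_zero_iff _ (FaithfulSMul.algebraMap_injective R K)).2 hϖ
  have hunit (u : Rˣ) {c : K} (hc : algebraMap R K u * c ∈ (algebraMap R K).range) :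
      c ∈ (algebraMap R K).range := by
    simpa [← mul_assoc, ← map_mul] using mul_mem (RingHom.mem_range_self _ (↑u⁻¹ : R)) hc
  have hdual (ξ : Fin 2 ⊕ κ → R) (hξ : ϖ ∣ ξ (Sum.inl 0) - t * ξ (Sum.inl 1)) :
      B x (Fintype.linearCombination R e ξ) ∈ (algebraMap R K).range :=
    Submodule.mem_one.1 (hx _ (mem_lineLattice_iff.2 ⟨ξ, hξ, rfl⟩))
  have hzero : e.repr x (Sum.inl 0) ∈ (algebraMap R K).range := by
    refine hunit (α 0) ?_
    convert hdual (Pi.single (Sum.inl 0) ϖ) (by simp) using 1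
    rw [Fintype.linearCombination_apply_single, ← algebraMap_smul K ϖ, map_smul,
      h.apply_basis_right, vertexWeight, Sum.elim_inl, smul_eq_mul]
    field_simp
  have hone : e.repr x (Sum.inl 1) ∈ (algebraMap R K).range := by
    refine hunit (α 1) ?_
    have hmem := mul_mem (RingHom.mem_range_self _ ϖ) (hdual (Sum.elim ![t, 1] 0) (by simp))
    convert sub_mem hmem (mul_mem (RingHom.mem_range_self _ (α 0 * t)) hzero) using 1
    rw [h.apply_linearCombination_right, Fintype.sum_sum_type, Fin.sum_univ_two]
    simp only [vertexWeight, Sum.elim_inl, Sum.elim_inr, Matrix.cons_val_zero,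
      Matrix.cons_val_one, Pi.zero_apply, map_zero, mul_zero, Finset.sum_const_zero, map_one,
      map_mul]
    field_simp
    ring
  have hinr (j : κ) : e.repr x (Sum.inr j) ∈ (algebraMap R K).range := by
    refine hunit (β j) ?_
    convert hdual (Pi.single (Sum.inr j) 1) (by simp) using 1
    rw [Fintype.linearCombination_apply_single, one_smul, h.apply_basis_right, vertexWeight,
      Sum.elim_inr]
  exact h.mem_iff.2 (Sum.forall.2 ⟨Fin.forall_fin_two.2 ⟨hzero, hone⟩, hinr⟩)

theorem dualSubmodule_lineLattice [IsDomain R] (hϖ : Prime ϖ)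
    (h : IsDiagonalBasis B Λ (vertexWeight K ϖ α β) e) (ht : ϖ ∣ α 0 * t ^ 2 + α 1) :
    B.dualSubmodule (lineLattice ϖ t e) = lineLattice ϖ t e := by
  refine le_antisymm (fun x hx => ?_) (h.lineLattice_le_dualSubmodule hϖ.ne_zero ht)
  have hxΛ := h.mem_of_mem_dualSubmodule_lineLattice hϖ.ne_zero hx
  rw [← h.span_eq, ← Fintype.range_linearCombination R] at hxΛ
  obtain ⟨ξ, rfl⟩ := hxΛ
  have hϖt : ¬ϖ ∣ α 0 * t := fun hdvd => by
    have hϖα : ϖ ∣ α 1 :=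
      (dvd_add_right (by simpa [pow_two, mul_assoc] using hdvd.mul_right t)).1 ht
    exact hϖ.not_isUnit (isUnit_of_dvd_unit hϖα (α 1).isUnit)
  have hline : Fintype.linearCombination R e (Sum.elim ![t, 1] 0) ∈ lineLattice ϖ t e :=
    mem_lineLattice_iff.2 ⟨_, by simp, rfl⟩
  have hdvd := (h.apply_linearCombination_mem_range_iff hϖ.ne_zero _ _).1
    (Submodule.mem_one.1 (hx _ hline))
  refine mem_lineLattice_iff.2 ⟨ξ, (hϖ.dvd_or_dvd ?_).resolve_left hϖt, rfl⟩
  convert dvd_sub hdvd (ht.mul_right (ξ (Sum.inl 1))) using 1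
  simp only [Sum.elim_inl, Matrix.cons_val_zero, Matrix.cons_val_one, mul_one]
  ring

theorem le_lineLattice_or_le_lineLattice_neg (hϖ : Prime ϖ)
    (h : IsDiagonalBasis B Λ (vertexWeight K ϖ α β) e) (ht : ϖ ∣ α 0 * t ^ 2 + α 1)
    (hLΛ : L ≤ Λ) (hL : L ≤ B.dualSubmodule L) :
    L ≤ lineLattice ϖ t e ∨ L ≤ lineLattice ϖ (-t) e := by
  have hunion : (L : Set M) ⊆ lineLattice ϖ t e ∪ lineLattice ϖ (-t) e := by
    intro x hx
    have hxΛ := hLΛ hx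
    rw [← h.span_eq, ← Fintype.range_linearCombination R] at hxΛ
    obtain ⟨ξ, rfl⟩ := hxΛ
    have hdvd := (h.apply_linearCombination_mem_range_iff hϖ.ne_zero ξ ξ).1
      (Submodule.mem_one.1 (hL hx _ hx))
    have hfactor : ϖ ∣ α 0 * ((ξ (Sum.inl 0) - t * ξ (Sum.inl 1)) *
        (ξ (Sum.inl 0) - -t * ξ (Sum.inl 1))) := by
      convert dvd_sub hdvd (ht.mul_right (ξ (Sum.inl 1) ^ 2)) using 1
      ring
    exact (hϖ.dvd_or_dvd ((α 0).isUnit.dvd_mul_left.1 hfactor)).imp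
      (fun hd => mem_lineLattice_iff.2 ⟨ξ, hd, rfl⟩) fun hd => mem_lineLattice_iff.2 ⟨ξ, hd, rfl⟩
  exact AddSubgroupClass.subset_union.1 hunion

theorem eq_lineLattice_or_eq_lineLattice_neg (hϖ : Prime ϖ)
    (h : IsDiagonalBasis B Λ (vertexWeight K ϖ α β) e) (ht : ϖ ∣ α 0 * t ^ 2 + α 1)
    (hLΛ : L ≤ Λ) (hL : B.dualSubmodule L = L) :
    L = lineLattice ϖ t e ∨ L = lineLattice ϖ (-t) e := by
  have heq {s : R} (hs : ϖ ∣ α 0 * s ^ 2 + α 1) (hle : L ≤ lineLattice ϖ s e) :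
      L = lineLattice ϖ s e :=
    le_antisymm hle fun x hx =>
      hL.le fun y hy => h.lineLattice_le_dualSubmodule hϖ.ne_zero hs hx y (hle hy)
  exact (h.le_lineLattice_or_le_lineLattice_neg hϖ ht hLΛ hL.ge).imp (heq ht)
    (heq (by rwa [neg_sq]))

end IsDiagonalBasis

end SelfDual

section SelfDualLattice

variable {R K M κ : Type*} [CommRing R] [Field K] [Algebra R K] [FaithfulSMul R K]
  [AddCommGroup M] [Module R M] [Module K M] [IsScalarTower R K M] [Fintype κ]

theorem isLattice_lineLattice [IsNoetherianRing R] {ϖ : R} (hϖ : ϖ ≠ 0) (t : R)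
    (e : Module.Basis (Fin 2 ⊕ κ) K M) : Submodule.IsLattice K (lineLattice ϖ t e) where
  fg := (IsNoetherian.noetherian _).map _
  span_eq_top := by
    classical
    have hϖ0 : algebraMap R K ϖ ≠ 0 :=
      (map_ne_zero_iff _ (FaithfulSMul.algebraMap_injective R K)).2 hϖ
    have hsmul (i : Fin 2 ⊕ κ) : ϖ • e i ∈ lineLattice ϖ t e := by
      refine mem_lineLattice_iff.2 ⟨Pi.single i ϖ, ?_, Fintype.linearCombination_apply_single ..⟩
      refine dvd_sub ?_ (dvd_mul_of_dvd_right ?_ t) <;>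
      · rw [Pi.single_apply]
        split_ifs <;> simp
    rw [eq_top_iff, ← e.span_eq, Submodule.span_le]
    rintro _ ⟨i, rfl⟩
    have hmem := Submodule.smul_mem _ (algebraMap R K ϖ)⁻¹ (Submodule.subset_span (hsmul i))
    rwa [← algebraMap_smul K ϖ, inv_smul_smul₀ hϖ0] at hmem

variable [DecidableEq κ] {B : LinearMap.BilinForm K M} {Λ : Submodule R M} {ϖ : R}
  {α : Fin 2 → Rˣ} {β : κ → Rˣ} {e : Module.Basis (Fin 2 ⊕ κ) K M}

theorem IsDiagonalBasis.exists_isLattice_dualSubmodule_eq [IsDomain R] [IsNoetherianRing R]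
    (hϖ : Prime ϖ) (h : IsDiagonalBasis B Λ (vertexWeight K ϖ α β) e)
    (hα : IsSquare (-∏ i, α i)) :
    ∃ L : Submodule R M, Submodule.IsLattice K L ∧ B.dualSubmodule L = L := by
  obtain ⟨s, hs⟩ := hα
  have hisotropic : (α 0 : R) * (s * ↑(α 0)⁻¹) ^ 2 + α 1 = 0 := by
    have hs : -(α 0 * α 1 : R) = s * s := by
      simpa [Fin.prod_univ_two] using congrArg Units.val hs
    linear_combination (s ^ 2 * ↑(α 0)⁻¹ - α 1) * (α 0).mul_inv - ↑(α 0)⁻¹ * hs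
  exact ⟨lineLattice ϖ (s * ↑(α 0)⁻¹) e, isLattice_lineLattice hϖ.ne_zero _ e,
    h.dualSubmodule_lineLattice hϖ (by rw [hisotropic]; exact dvd_zero ϖ)⟩

end SelfDualLattice

section BaseChangeLattice

open TensorProduct

variable {R K M R' K' : Type*} [CommRing R] [Field K] [Algebra R K] [CommRing R'] [Field K']
  [Algebra R' K'] [Algebra K K'] {j : R →+* R'}

theorem algebraMap_comp_vertexWeight
    (hj : ∀ c, algebraMap R' K' (j c) = algebraMap K K' (algebraMap R K c)) {τ κ : Type*} (ϖ : R)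
    (α : τ → Rˣ) (β : κ → Rˣ) :
    algebraMap K K' ∘ vertexWeight K ϖ α β =
      vertexWeight K' (j ϖ) (fun i => Units.map j (α i)) fun i => Units.map j (β i) := by
  ext i
  cases i <;> simp [vertexWeight, hj]

variable [AddCommGroup M] [Module R M] [Module K M] [IsScalarTower R K M]
  [SMulCommClass K R' K'] {ι : Type*} [Fintype ι] [DecidableEq ι]
  {B : LinearMap.BilinForm K M} {Λ : Submodule R M} {w : ι → K} {e : Module.Basis ι K M}

theorem IsDiagonalBasis.baseChange
    (hj : ∀ c, algebraMap R' K' (j c) = algebraMap K K' (algebraMap R K c))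
    (h : IsDiagonalBasis B Λ w e) :
    IsDiagonalBasis (B.baseChange K')
      (Submodule.span R' ((fun x => (1 : K') ⊗ₜ[K] x) '' (Λ : Set M)))
      (algebraMap K K' ∘ w) (Algebra.TensorProduct.basis K' e) where
  span_eq := by
    refine le_antisymm (Submodule.span_le.2 ?_) (Submodule.span_le.2 ?_)
    · rintro _ ⟨i, rfl⟩
      refine Submodule.subset_span ⟨e i, ?_, (Algebra.TensorProduct.basis_apply e i).symm⟩
      exact h.span_eq ▸ Submodule.subset_span ⟨i, rfl⟩
    · rintro _ ⟨x, hx, rfl⟩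
      rw [SetLike.mem_coe, ← h.span_eq, ← Fintype.range_linearCombination R] at hx
      obtain ⟨ξ, rfl⟩ := hx
      have htmul (c : R) (y : M) : (1 : K') ⊗ₜ[K] (c • y) = j c • ((1 : K') ⊗ₜ[K] y) := by
        rw [← algebraMap_smul K c y, ← smul_tmul, smul_tmul', Algebra.smul_def,
          Algebra.smul_def, hj]
      simp only [Fintype.linearCombination_apply, tmul_sum, htmul]
      refine Submodule.sum_mem _ fun i _ => Submodule.smul_mem _ _ (Submodule.subset_span ⟨i, ?_⟩)
      exact Algebra.TensorProduct.basis_apply e i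
  toMatrix_eq := by
    ext i k
    simp [LinearMap.BilinForm.toMatrix_apply, h.apply_basis, Matrix.diagonal_apply,
      apply_ite (algebraMap K K'), Algebra.smul_def]

end BaseChangeLattice

section Transitivity

open TensorProduct

variable {R K M R' K' : Type*} [CommRing R] [Field K] [Algebra R K] [CommRing R'] [Field K']
  [Algebra R' K'] [Algebra K K'] [AddCommGroup M] [Module R M] [Module K M]
  [SMulCommClass K R' K'] {j : R →+* R'} {B : LinearMap.BilinForm K M} {Λ Λ₁ Λ₂ : Submodule R M}
  {ϖ : R} {t : R'} {κ : Type*} [Fintype κ] {α : Fin 2 → Rˣ} {β : κ → Rˣ}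
  {e e₁ e₂ : Module.Basis (Fin 2 ⊕ κ) K M}

theorem coe_basis_negBasis {ι : Type*} [DecidableEq ι] (e : Module.Basis ι K M) (i : ι) :
    ⇑(Algebra.TensorProduct.basis K' (negBasis e i)) =
      Function.update (Algebra.TensorProduct.basis K' e) i
        (-Algebra.TensorProduct.basis K' e i) := by
  ext k
  rcases eq_or_ne k i with rfl | hk
  · simp [coe_negBasis, tmul_neg]
  · simp [coe_negBasis, hk]

theorem exists_dvd_unit_mul_sq_add_unit {ϖ : R'} (hsq : ∀ a, ∃ t, ϖ ∣ t ^ 2 - a) (u v : R'ˣ) :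
    ∃ t, ϖ ∣ u * t ^ 2 + v := by
  obtain ⟨t, ht⟩ := hsq (-(↑u⁻¹ * v))
  refine ⟨t, ?_⟩
  convert ht.mul_left (u : R') using 1
  linear_combination (-v : R') * u.mul_inv

theorem det_equiv_refl {ι : Type*} [Fintype ι] [DecidableEq ι] (e e' : Module.Basis ι K M) :
    LinearMap.det (e.equiv e' (.refl ι) : M →ₗ[K] M) = e.det e' := by
  have hcomp : (e.equiv e' (.refl ι) : M →ₗ[K] M) ∘ e = e' :=
    funext fun i => e.equiv_apply i e' (.refl ι)
  rw [← hcomp, Module.Basis.det_comp, e.det_self, mul_one]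

theorem baseChange_equiv_image_lineLattice (ϖ : R') :
    (LinearMap.baseChange K' (e₁.equiv e₂ (.refl _) : M →ₗ[K] M)) ''
        (lineLattice ϖ t (Algebra.TensorProduct.basis K' e₁) : Set (K' ⊗[K] M)) =
      lineLattice ϖ t (Algebra.TensorProduct.basis K' e₂) := by
  let g := (LinearMap.baseChange K' (e₁.equiv e₂ (.refl _) : M →ₗ[K] M)).restrictScalars R'
  have hg : g ∘ Algebra.TensorProduct.basis K' e₁ = Algebra.TensorProduct.basis K' e₂ := by
    ext i
    simp [g]
  have hmap := map_lineLattice g ϖ t (Algebra.TensorProduct.basis K' e₁)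
  rw [hg] at hmap
  exact congrArg SetLike.coe hmap

namespace IsDiagonalBasis

variable [IsScalarTower R K M] [DecidableEq κ]

theorem exists_eq_lineLattice [FaithfulSMul R' K']
    (hj : ∀ c, algebraMap R' K' (j c) = algebraMap K K' (algebraMap R K c)) (hϖ : Prime (j ϖ))
    (h : IsDiagonalBasis B Λ (vertexWeight K ϖ α β) e)
    (ht : j ϖ ∣ Units.map (j : R →* R') (α 0) * t ^ 2 + Units.map (j : R →* R') (α 1))
    {L : Submodule R' (K' ⊗[K] M)}
    (hLΛ : L ≤ Submodule.span R' ((fun x => (1 : K') ⊗ₜ[K] x) '' (Λ : Set M)))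
    (hL : (B.baseChange K').dualSubmodule L = L) :
    ∃ e', IsDiagonalBasis B Λ (vertexWeight K ϖ α β) e' ∧
      L = lineLattice (j ϖ) t (Algebra.TensorProduct.basis K' e') := by
  have h' := h.baseChange hj
  rw [algebraMap_comp_vertexWeight hj] at h'
  rcases h'.eq_lineLattice_or_eq_lineLattice_neg hϖ ht hLΛ hL with hpos | hneg
  · exact ⟨e, h, hpos⟩
  · refine ⟨negBasis e (Sum.inl 1), h.isDiagonalBasis_negBasis _, ?_⟩
    rw [coe_basis_negBasis, lineLattice_update_neg_inl, hneg]

theorem exists_equiv_of_lineLattice [Nonempty κ] [IsFractionRing R K] (hϖ : ϖ ≠ 0)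
    (K' : Type*) [Field K'] [Algebra R' K'] [Algebra K K'] [SMulCommClass K R' K'] (ϖ' t : R')
    (h₁ : IsDiagonalBasis B Λ₁ (vertexWeight K ϖ α β) e₁)
    (h₂ : IsDiagonalBasis B Λ₂ (vertexWeight K ϖ α β) e₂) :
    ∃ g : M ≃ₗ[K] M, (∀ x y, B (g x) (g y) = B x y) ∧ LinearMap.det (g : M →ₗ[K] M) = 1 ∧
      g '' (Λ₁ : Set M) = Λ₂ ∧
      LinearMap.baseChange K' (g : M →ₗ[K] M) ''
          (lineLattice ϖ' t (Algebra.TensorProduct.basis K' e₁) : Set (K' ⊗[K] M)) =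
        lineLattice ϖ' t (Algebra.TensorProduct.basis K' e₂) := by
  inhabit κ
  rcases h₁.det_eq_one_or_neg_one h₂ (vertexWeight_ne_zero hϖ α β) with hdet | hdet
  · exact ⟨e₁.equiv e₂ (.refl _), h₁.apply_equiv_apply_equiv h₂, by rw [det_equiv_refl, hdet],
      h₁.equiv_image h₂, baseChange_equiv_image_lineLattice _⟩
  · -- reversing a unimodular basis vector corrects the determinant and preserves the line
    have h₂' := h₂.isDiagonalBasis_negBasis (Sum.inr default)
    refine ⟨e₁.equiv _ (.refl _), h₁.apply_equiv_apply_equiv h₂', ?_, h₁.equiv_image h₂', ?_⟩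
    · rw [det_equiv_refl, det_negBasis, hdet, neg_neg]
    · rw [baseChange_equiv_image_lineLattice, coe_basis_negBasis, lineLattice_update_neg_inr]

end IsDiagonalBasis

end Transitivity

section General

open TensorProduct

variable {R K M : Type*} [CommRing R] [IsDomain R] [IsDiscreteValuationRing R]
  [HenselianLocalRing R] [Finite (IsLocalRing.ResidueField R)] [Field K] [Algebra R K]
  [IsFractionRing R K] [AddCommGroup M] [Module R M] [Module K M] [IsScalarTower R K M]

theorem IsVertexLattice.exists_isDiagonalBasis_isDiagonalBasis {B : LinearMap.BilinForm K M}
    {Λ₁ Λ₂ : Submodule R M} {ϖ : R} (h2 : IsUnit (2 : R)) (hϖ : Irreducible ϖ) (hB : B.IsSymm)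
    (hnosd : ¬∃ L : Submodule R M, Submodule.IsLattice K L ∧ B.dualSubmodule L = L)
    (hΛ₁ : IsVertexLattice ϖ B 2 Λ₁) (hΛ₂ : IsVertexLattice ϖ B 2 Λ₂) :
    ∃ (m : ℕ) (α : Fin 2 → Rˣ) (β : Fin m → Rˣ) (e₁ e₂ : Module.Basis (Fin 2 ⊕ Fin m) K M),
      IsDiagonalBasis B Λ₁ (vertexWeight K ϖ α β) e₁ ∧
        IsDiagonalBasis B Λ₂ (vertexWeight K ϖ α β) e₂ := by
  obtain ⟨m₁, α₁, β₁, e₁, he₁⟩ := hΛ₁.exists_isDiagonalBasis h2 hϖ hB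
  obtain ⟨m₂, α₂, β₂, e₂, he₂⟩ := hΛ₂.exists_isDiagonalBasis h2 hϖ hB
  have hm : m₁ = m₂ := by
    simpa using Fintype.card_congr (e₁.indexEquiv e₂)
  subst hm
  have hα : IsSquare ((∏ i, α₁ i) * ∏ i, α₂ i) := by
    have hα₁ : ¬IsSquare (-∏ i, α₁ i) := fun hs =>
      hnosd (he₁.exists_isLattice_dualSubmodule_eq hϖ.prime hs)
    have hα₂ : ¬IsSquare (-∏ i, α₂ i) := fun hs =>
      hnosd (he₂.exists_isLattice_dualSubmodule_eq hϖ.prime hs)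
    simpa only [neg_mul_neg] using isSquare_mul_of_not_isSquare h2 hα₁ hα₂
  obtain ⟨e, he⟩ := he₁.exists_of_isSquare_prod_mul_prod h2 hϖ.ne_zero he₂ hα
  exact ⟨m₁, α₂, β₂, e, e₂, he, he₂⟩

theorem statement_10_general {R' K' : Type*} [CommRing R'] [Field K'] [Algebra R' K']
    [FaithfulSMul R' K'] [Algebra K K'] [SMulCommClass K R' K'] [Invertible (2 : K)]
    (h2 : IsUnit (2 : R)) {ϖ : R} (hϖ : Irreducible ϖ)
    (j : R →+* R') (hj : ∀ c, algebraMap R' K' (j c) = algebraMap K K' (algebraMap R K c))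
    (hjϖ : Prime (j ϖ)) (hsq : ∀ a, ∃ t, j ϖ ∣ t ^ 2 - a)
    (Q : QuadraticForm K M) (hn : 3 ≤ Module.finrank K M)
    (hnosd : ¬∃ L : Submodule R M,
      Submodule.IsLattice K L ∧ LinearMap.BilinForm.dualSubmodule (polarBilin Q) L = L)
    {Λ₁ Λ₂ : Submodule R M} (hΛ₁ : IsVertexLattice ϖ (polarBilin Q) 2 Λ₁)
    (hΛ₂ : IsVertexLattice ϖ (polarBilin Q) 2 Λ₂) {L₁ L₂ : Submodule R' (K' ⊗[K] M)}
    (hsd₁ : LinearMap.BilinForm.dualSubmodule (polarBilin (Q.baseChange K')) L₁ = L₁)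
    (hsd₂ : LinearMap.BilinForm.dualSubmodule (polarBilin (Q.baseChange K')) L₂ = L₂)
    (hle₁ : L₁ ≤ Submodule.span R' ((fun x => (1 : K') ⊗ₜ[K] x) '' (Λ₁ : Set M)))
    (hle₂ : L₂ ≤ Submodule.span R' ((fun x => (1 : K') ⊗ₜ[K] x) '' (Λ₂ : Set M))) :
    ∃ g : M ≃ₗ[K] M, (∀ x, Q (g x) = Q x) ∧ LinearMap.det (g : M →ₗ[K] M) = 1 ∧
      g '' (Λ₁ : Set M) = Λ₂ ∧
      LinearMap.baseChange K' (g : M →ₗ[K] M) '' (L₁ : Set (K' ⊗[K] M)) = L₂ := by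
  have hB : LinearMap.BilinForm.IsSymm (polarBilin Q) := ⟨fun x y => polar_comm Q x y⟩
  let : Invertible (2 : K') := (Invertible.map (algebraMap K K') 2).copy 2 (map_ofNat _ 2).symm
  rw [QuadraticForm.polarBilin_baseChange] at hsd₁ hsd₂
  obtain ⟨m, α, β, e₁, e₂, he₁, he₂⟩ :=
    hΛ₁.exists_isDiagonalBasis_isDiagonalBasis h2 hϖ hB hnosd hΛ₂
  have : NeZero m := ⟨by
    rintro rfl
    simp [Module.finrank_eq_card_basis e₁] at hn⟩
  obtain ⟨t, ht⟩ := exists_dvd_unit_mul_sq_add_unit hsq (Units.map j (α 0)) (Units.map j (α 1))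
  obtain ⟨e₁', he₁', rfl⟩ := he₁.exists_eq_lineLattice hj hjϖ ht hle₁ hsd₁
  obtain ⟨e₂', he₂', rfl⟩ := he₂.exists_eq_lineLattice hj hjϖ ht hle₂ hsd₂
  obtain ⟨g, hg, hdet, hΛ, hL⟩ := he₁'.exists_equiv_of_lineLattice hϖ.ne_zero K' (j ϖ) t he₂'
  refine ⟨g, fun x => ?_, hdet, hΛ, hL⟩
  simpa [polar_self, Invertible.ne_zero (2 : K)] using hg x x

end General

section PadicWitt

instance instHenselianLocalRingPadicInt : HenselianLocalRing ℤ_[p] where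
  is_henselian f hf a hroot hsimple :=
    HenselianRing.is_henselian (I := IsLocalRing.maximalIdeal ℤ_[p]) f hf a hroot (hsimple.map _)

instance instFiniteResidueFieldPadicInt : Finite (IsLocalRing.ResidueField ℤ_[p]) :=
  .of_equiv _ (PadicInt.residueField (p := p)).symm.toEquiv

variable {p}

theorem isUnit_two_padicInt (hp : p ≠ 2) : IsUnit (2 : ℤ_[p]) := by
  rw [PadicInt.isUnit_iff]
  exact PadicInt.norm_natCast_eq_one_iff.2 ((Nat.coprime_primes Fact.out Nat.prime_two).2 hp)

theorem exists_dvd_sq_sub_wittVector {k : Type*} [Field k] [CharP k p] [IsAlgClosed k]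
    (a : WittVector p k) : ∃ t, (p : WittVector p k) ∣ t ^ 2 - a := by
  obtain ⟨s, hs⟩ := IsAlgClosed.exists_pow_nat_eq (WittVector.constantCoeff a) two_pos
  have hcoeff : WittVector.constantCoeff (WittVector.teichmuller p s) = s :=
    WittVector.teichmuller_coeff_zero p s
  refine ⟨WittVector.teichmuller p s, ?_⟩
  rw [← Ideal.mem_span_singleton, ← WittVector.ker_constantCoeff, RingHom.mem_ker, map_sub,
    map_pow, hcoeff, hs, sub_self]

theorem exists_ringHom_of_forall_mem_range {A C D : Type*} [Ring A] [Ring C] [Ring D]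
    (f : A →+* D) {g : C →+* D} (hg : Function.Injective g) (h : ∀ a, f a ∈ g.range) :
    ∃ j : A →+* C, ∀ a, g (j a) = f a := by
  let φ := RingEquiv.ofLeftInverse (Function.leftInverse_invFun hg)
  refine ⟨φ.symm.toRingHom.comp (f.codRestrict g.range h), fun a => ?_⟩
  exact congrArg Subtype.val (φ.apply_symm_apply _)

theorem IsTypeTwoVertexLattice.isVertexLattice {Q : QuadraticForm ℚ_[p] V}
    {Λ : Submodule ℤ_[p] V} (hΛ : IsTypeTwoVertexLattice p Q Λ) :
    IsVertexLattice (p : ℤ_[p]) (polarBilin Q) 2 Λ := by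
  obtain ⟨⟨hfg, hspan⟩, hsmul, hle, f, hf₀, hf₂, hf⟩ := hΛ
  refine ⟨⟨hfg, hspan⟩, hsmul, hle, ?_⟩
  rw [← relIndex_of_covBy_chain f hf, hf₀, hf₂]
  rfl

end PadicWitt

theorem statement_10 (hp : p ≠ 2)
    (Q : QuadraticForm ℚ_[p] V)
    (hQ : LinearMap.BilinForm.Nondegenerate (QuadraticMap.polarBilin Q))
    (hn : 3 ≤ Module.finrank ℚ_[p] V)
    (hnosd : ¬ ∃ L : Submodule ℤ_[p] V, IsZpLattice p L ∧ zpDual p Q L = L)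
    -- the embedding `ℚ_p → K₀` restricts to `ℤ_p → W₀`
    (hcomp : ∀ c : ℤ_[p],
      algebraMap ℚ_[p] (FractionRing (WittVector p 𝔽)) (algebraMap ℤ_[p] ℚ_[p] c) ∈
        (algebraMap (WittVector p 𝔽) (FractionRing (WittVector p 𝔽))).range)
    (Λ₁ Λ₂ : Submodule ℤ_[p] V)
    (hΛ₁ : IsTypeTwoVertexLattice p Q Λ₁) (hΛ₂ : IsTypeTwoVertexLattice p Q Λ₂)
    (L₁ L₂ : Submodule (WittVector p 𝔽) (TensorProduct ℚ_[p] (FractionRing (WittVector p 𝔽)) V))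
    (hL₁ : IsWLattice p 𝔽 L₁) (hL₂ : IsWLattice p 𝔽 L₂)
    (hsd₁ : wDual p 𝔽 (Q.baseChange (FractionRing (WittVector p 𝔽))) L₁ = L₁)
    (hsd₂ : wDual p 𝔽 (Q.baseChange (FractionRing (WittVector p 𝔽))) L₂ = L₂)
    (hbetween₁ : baseChangeLattice p 𝔽 (zpDual p Q Λ₁) ≤ L₁ ∧ L₁ ≤ baseChangeLattice p 𝔽 Λ₁)
    (hbetween₂ : baseChangeLattice p 𝔽 (zpDual p Q Λ₂) ≤ L₂ ∧ L₂ ≤ baseChangeLattice p 𝔽 Λ₂) :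
    ∃ g : V ≃ₗ[ℚ_[p]] V, (∀ x, Q (g x) = Q x) ∧
      LinearMap.det (g : V →ₗ[ℚ_[p]] V) = 1 ∧
      ⇑g '' (Λ₁ : Set V) = (Λ₂ : Set V) ∧
      ⇑(LinearMap.baseChange (FractionRing (WittVector p 𝔽)) (g : V →ₗ[ℚ_[p]] V)) ''
          (L₁ : Set (TensorProduct ℚ_[p] (FractionRing (WittVector p 𝔽)) V)) =
        (L₂ : Set (TensorProduct ℚ_[p] (FractionRing (WittVector p 𝔽)) V)) := by
  obtain ⟨j, hj⟩ := exists_ringHom_of_forall_mem_range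
    ((algebraMap ℚ_[p] (FractionRing (WittVector p 𝔽))).comp (algebraMap ℤ_[p] ℚ_[p]))
    (IsFractionRing.injective (WittVector p 𝔽) (FractionRing (WittVector p 𝔽))) hcomp
  have hjp : j p = p := map_natCast j p
  exact statement_10_general (isUnit_two_padicInt hp) PadicInt.irreducible_p j hj
    (hjp ▸ (WittVector.irreducible p).prime) (hjp ▸ exists_dvd_sq_sub_wittVector) Q hn
    (fun ⟨L, hL, hsd⟩ => hnosd ⟨L, ⟨hL.fg, hL.span_eq_top⟩, hsd⟩) hΛ₁.isVertexLattice
    hΛ₂.isVertexLattice hsd₁ hsd₂ hbetween₁.2 hbetween₂.2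

end BaseChange
end
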